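/- arXiv:2407.12253 — 5 statements merged into one kernel-verified Lean document; each statement's English description precedes it below -/
import Mathlib

section
/- Let A and B be sets of positive integers and let C = A + B. Then for every positive integer n, either C(n)/n = 1, or C(n)/n ≥ min over all positive integers m ≤ n with m ∉ C of (A(m) + B(m))/m. -/
/-!
The proof follows Artin and Scherk. Adjoin `0` to `A` and `B`, so that `C = A + B`, and call the
elements of `ℕ \ C` gaps. The heart is the following statement (`exists_gap_interval_count`): if
`n` is a gap, there is a gap `m ∈ [1, n]` with `A(m) + B(m) ≤ C(n) - C(n - m)`. The theorem follows
from it by strong induction: a ratio `γ < 1` that is smaller than `(A(m) + B(m)) / m` at all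
gaps `m ∈ [1, n]` satisfies `γ k < C(k)` for `1 ≤ k ≤ n`, so `γ = C(n) / n` is impossible.

To find `m`, call `(c, c', a, b)` *bad* if `c, c' ≤ n` are gaps, `a ∈ A`, `b ∈ B` and
`c + c' = n + a + b`. Without bad quadruples, let `m` be the least gap. Then every number in
`(n - m, n)` lies in `C`, so `C(n) - C(n - m) = m - 1`, and `A(m) + B(m) ≤ m - 1` because `m` is
not of the form `a + b`.

Otherwise let `β` be the least last entry of a bad quadruple, let `C*` be the set of gaps
occurring as first entry of a bad quadruple with last entry `β`, and enlarge `B` by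
`B* = β + n - C*`, which is disjoint from `B`. Then `A + (B ∪ B*)` agrees with `C ∪ C*` up to `n`,
still misses `n`, and its bad quadruples have last entry larger than `β`; the number of gaps
drops, so induction gives `m` for `B ∪ B*`. The same `m` works for `B` as soon as `C*` has at
most as many elements in `(n - m, n]` as `B*` has in `(0, m]`, that is, if `c ∈ C*` with
`n - m < c` forces `β + n - c ≤ m`. If this failed, `z = m + c - n` would be in `(0, β)`, and the
inductive information that all numbers `z < m` with `z ≤ β` lie in `A + B` would turn `(m, c)`
into a bad quadruple with last entry below `β`.
-/

/-- The counting function of a set of integers: `count A x` is the number of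
elements `a ∈ A` with `1 ≤ a ≤ x`. -/
noncomputable def count (A : Set ℕ) (x : ℕ) : ℕ := (A ∩ Set.Icc 1 x).ncard

/-- The sumset of two sets of positive integers: all integers of the form
`a + b` with `a ∈ A ∪ {0}` and `b ∈ B ∪ {0}`. -/
def sumset (A B : Set ℕ) : Set ℕ :=
  {n | ∃ a ∈ A ∪ {0}, ∃ b ∈ B ∪ {0}, n = a + b}

open scoped Classical in
/-- The number of elements of `S` in the half-open interval `(x, y]`. -/
noncomputable def cntIoc (S : Set ℕ) (x y : ℕ) : ℕ :=
  ((Finset.Ioc x y).filter (· ∈ S)).card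

theorem cntIoc_mono {S T : Set ℕ} {x y : ℕ} (h : ∀ z, x < z → z ≤ y → z ∈ S → z ∈ T) :
    cntIoc S x y ≤ cntIoc T x y := by
  classical
  unfold cntIoc
  apply Finset.card_le_card
  intro z hz
  simp only [Finset.mem_filter, Finset.mem_Ioc] at hz ⊢
  exact ⟨hz.1, h z hz.1.1 hz.1.2 hz.2⟩

theorem cntIoc_lt {S T : Set ℕ} {x y w : ℕ} (h : ∀ z ∈ S, z ∈ T) (hx : x < w) (hy : w ≤ y)
    (hwS : w ∉ S) (hwT : w ∈ T) : cntIoc S x y < cntIoc T x y := by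
  classical
  unfold cntIoc
  apply Finset.card_lt_card
  rw [Finset.ssubset_iff_of_subset]
  · exact ⟨w, Finset.mem_filter.2 ⟨Finset.mem_Ioc.2 ⟨hx, hy⟩, hwT⟩,
      fun hw => hwS (Finset.mem_filter.1 hw).2⟩
  · intro z hz
    rw [Finset.mem_filter] at hz ⊢
    exact ⟨hz.1, h z hz.2⟩

theorem cntIoc_union_le (S T : Set ℕ) (x y : ℕ) :
    cntIoc (S ∪ T) x y ≤ cntIoc S x y + cntIoc T x y := by
  classical
  unfold cntIoc
  simp only [Set.mem_union, Finset.filter_or]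
  exact Finset.card_union_le _ _

theorem cntIoc_union_of_disjoint {S T : Set ℕ} (x y : ℕ) (h : ∀ z ∈ S, z ∉ T) :
    cntIoc (S ∪ T) x y = cntIoc S x y + cntIoc T x y := by
  classical
  unfold cntIoc
  simp only [Set.mem_union, Finset.filter_or]
  apply Finset.card_union_of_disjoint
  rw [Finset.disjoint_left]
  intro z hz hz'
  exact h z (Finset.mem_filter.1 hz).2 (Finset.mem_filter.1 hz').2

open scoped Pointwise

/-- If `m` is not a sum `a + b`, then `A ∩ [1, m]` and `m - (B ∩ [1, m])` are disjoint subsets of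
`[1, m - 1]`. -/
theorem cntIoc_add_lt {A B : Set ℕ} (hA : 0 ∈ A) (hB : 0 ∈ B) {m : ℕ} (hm : m ∉ A + B) :
    cntIoc A 0 m + cntIoc B 0 m ≤ m - 1 := by
  classical
  have hmA : m ∉ A := fun h => hm (Set.mem_add.2 ⟨m, h, 0, hB, by omega⟩)
  have hmB : m ∉ B := fun h => hm (Set.mem_add.2 ⟨0, hA, m, h, by omega⟩)
  unfold cntIoc
  have hinj : Set.InjOn (fun b => m - b)
      ((Finset.Ioc 0 m).filter (· ∈ B) : Finset ℕ) := by
    intro x hx y hy hxy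
    simp only [Finset.coe_filter, Finset.mem_Ioc, Set.mem_ofPred_eq] at hx hy hxy
    omega
  rw [← Finset.card_image_of_injOn hinj, ← Finset.card_union_of_disjoint]
  · have : m - 1 = (Finset.Ioo 0 m).card := by simp
    rw [this]
    apply Finset.card_le_card
    intro x hx
    simp only [Finset.mem_union, Finset.mem_filter, Finset.mem_Ioc, Finset.mem_image] at hx
    rw [Finset.mem_Ioo]
    rcases hx with ⟨h1, h2⟩ | ⟨b, ⟨h1, h2⟩, rfl⟩
    · have : x ≠ m := fun h => hmA (h ▸ h2)
      omega
    · have : b ≠ m := fun h => hmB (h ▸ h2)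
      omega
  · rw [Finset.disjoint_left]
    intro x hx hx'
    simp only [Finset.mem_filter, Finset.mem_Ioc, Finset.mem_image] at hx hx'
    obtain ⟨b, ⟨h1, h2⟩, h3⟩ := hx'
    exact hm (Set.mem_add.2 ⟨x, hx.2, b, h2, by omega⟩)

/-- The case without bad quadruples: the least gap has the required property. -/
theorem exists_gap_of_normal {A B : Set ℕ} (hA : 0 ∈ A) (hB : 0 ∈ B) {n : ℕ} (hn : n ∉ A + B)
    (hnorm : ∀ c c' a b, c ∉ A + B → c ≤ n → c' ∉ A + B → c' ≤ n → a ∈ A → b ∈ B →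
      c + c' ≠ n + a + b) :
    ∃ m, 1 ≤ m ∧ m ≤ n ∧ m ∉ A + B ∧ (∀ z < m, z ∈ A + B) ∧
      cntIoc A 0 m + cntIoc B 0 m ≤ cntIoc (A + B) (n - m) n := by
  classical
  have hex : ∃ m, m ∉ A + B := ⟨n, hn⟩
  have hm := Nat.find_spec hex
  have hmn : Nat.find hex ≤ n := Nat.find_min' hex hn
  have hlt : ∀ z < Nat.find hex, z ∈ A + B := fun z hz => not_not.1 (Nat.find_min hex hz)
  set m := Nat.find hex
  have h0 : (0 : ℕ) ∈ A + B := Set.mem_add.2 ⟨0, hA, 0, hB, rfl⟩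
  have hm0 : m ≠ 0 := fun h => hm (h ▸ h0)
  refine ⟨m, by omega, hmn, hm, hlt, (cntIoc_add_lt hA hB hm).trans ?_⟩
  have : m - 1 = (Finset.Ioo (n - m) n).card := by simp; omega
  rw [this]
  apply Finset.card_le_card
  intro x hx
  rw [Finset.mem_Ioo] at hx
  rw [Finset.mem_filter, Finset.mem_Ioc]
  refine ⟨by omega, ?_⟩
  by_contra hxC
  obtain ⟨a, ha, b, hb, hab⟩ := Set.mem_add.1 (hlt (m + x - n) (by omega))
  exact hnorm m x a b hm hmn hxC (by omega) ha hb (by omega)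

/-- The fundamental lemma, in the form suited to induction on a bound `k` for the number of gaps up to `n`.
The parameter `β₀` is a lower bound for the last entries of bad quadruples; the conclusion that
the numbers below `min m β₀` are in `A + B` is what survives the passage from an enlarged `B`
back to `B`. -/
theorem exists_gap_aux {A : Set ℕ} (hA : 0 ∈ A) (n : ℕ) (k : ℕ) :
    ∀ (B : Set ℕ) (β₀ : ℕ), 0 ∈ B → n ∉ A + B → cntIoc (A + B)ᶜ 0 n ≤ k →
    (∀ c c' a b, c ∉ A + B → c ≤ n → c' ∉ A + B → c' ≤ n → a ∈ A → b ∈ B →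
      c + c' = n + a + b → β₀ ≤ b) →
    ∃ m, 1 ≤ m ∧ m ≤ n ∧ m ∉ A + B ∧ (∀ z < m, z < β₀ → z ∈ A + B) ∧
      cntIoc A 0 m + cntIoc B 0 m ≤ cntIoc (A + B) (n - m) n := by
  classical
  induction k with
  | zero =>
    intro B β₀ hB hn hk _
    exfalso
    have h0 : (0 : ℕ) ∈ A + B := Set.mem_add.2 ⟨0, hA, 0, hB, rfl⟩
    have hn0 : n ≠ 0 := fun h => hn (h ▸ h0)
    have := cntIoc_lt (S := ∅) (T := (A + B)ᶜ) (x := 0) (y := n) (w := n)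
      (fun z hz => hz.elim) (by omega) le_rfl (fun h => h.elim) hn
    omega
  | succ k ih =>
    intro B β₀ hB hn hk hβ₀
    by_cases hex : ∃ b, b ∈ B ∧ ∃ c c' a, c ∉ A + B ∧ c ≤ n ∧ c' ∉ A + B ∧ c' ≤ n ∧ a ∈ A ∧
        c + c' = n + a + b
    swap
    · obtain ⟨m, h1, h2, h3, h4, h5⟩ := exists_gap_of_normal hA hB hn
        (fun c c' a b hc hcn hc' hcn' ha hb h => hex ⟨b, hb, c, c', a, hc, hcn, hc', hcn', ha, h⟩)
      exact ⟨m, h1, h2, h3, fun z hz _ => h4 z hz, h5⟩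
    obtain ⟨hβB, c₀, c₁, a₀, hc₀, hc₀n, hc₁, hc₁n, ha₀, h₀⟩ := Nat.find_spec hex
    have hβmin : ∀ c c' a b, c ∉ A + B → c ≤ n → c' ∉ A + B → c' ≤ n → a ∈ A → b ∈ B →
        c + c' = n + a + b → Nat.find hex ≤ b :=
      fun c c' a b hc hcn hc' hcn' ha hb h =>
        Nat.find_min' hex ⟨hb, c, c', a, hc, hcn, hc', hcn', ha, h⟩
    set β := Nat.find hex
    have hββ₀ : β₀ ≤ β := hβ₀ c₀ c₁ a₀ β hc₀ hc₀n hc₁ hc₁n ha₀ hβB h₀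
    let Cs : Set ℕ := {x | x ∉ A + B ∧ x ≤ n ∧ ∃ c, c ∉ A + B ∧ c ≤ n ∧ ∃ a ∈ A, x + c = n + a + β}
    let Bs : Set ℕ := {b | ∃ c ∈ Cs, b + c = n + β}
    have hnCs : n ∉ Cs := by
      rintro ⟨_, _, c, hc, _, a, ha, h⟩
      exact hc (Set.mem_add.2 ⟨a, ha, β, hβB, by omega⟩)
    have hBs_gt : ∀ b ∈ Bs, β < b := by
      rintro b ⟨c, hc, h⟩
      have h1 : c ≠ n := fun h => hnCs (h ▸ hc)
      have h2 : c ≤ n := hc.2.1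
      omega
    have hBBs : ∀ b ∈ B, b ∉ Bs := by
      rintro b hb ⟨c, ⟨_, _, c', hc', _, a, ha, h⟩, hbc⟩
      exact hc' (Set.mem_add.2 ⟨a, ha, b, hb, by omega⟩)
    have hsub : ∀ x ∈ A + B, x ∈ A + (B ∪ Bs) := fun x hx =>
      Set.add_subset_add_left Set.subset_union_left hx
    have hC1 : ∀ x ≤ n, x ∈ A + (B ∪ Bs) → x ∈ (A + B) ∪ Cs := by
      intro x hxn hx
      by_cases hxC : x ∈ A + B
      · exact Or.inl hxC
      obtain ⟨a, ha, b, hb | ⟨c, hc, hbc⟩, hab⟩ := Set.mem_add.1 hx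
      · exact Or.inl (Set.mem_add.2 ⟨a, ha, b, hb, hab⟩)
      · exact Or.inr ⟨hxC, hxn, c, hc.1, hc.2.1, a, ha, by omega⟩
    have hCsC1 : ∀ x ∈ Cs, x ∈ A + (B ∪ Bs) := by
      rintro x ⟨hx, hxn, c, hc, hcn, a, ha, h⟩
      have hcs : c ∈ Cs := ⟨hc, hcn, x, hx, hxn, a, ha, by omega⟩
      exact Set.mem_add.2 ⟨a, ha, n + β - c, Or.inr ⟨c, hcs, by omega⟩, by omega⟩
    have hc₀s : c₀ ∈ Cs := ⟨hc₀, hc₀n, c₁, hc₁, hc₁n, a₀, ha₀, h₀⟩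
    have hn1 : n ∉ A + (B ∪ Bs) := fun h => (hC1 n le_rfl h).elim hn hnCs
    have hk1 : cntIoc (A + (B ∪ Bs))ᶜ 0 n ≤ k := by
      apply Nat.le_of_lt_succ
      refine lt_of_lt_of_le ?_ hk
      have h0 : (0 : ℕ) ∈ A + B := Set.mem_add.2 ⟨0, hA, 0, hB, rfl⟩
      have hc₀0 : c₀ ≠ 0 := fun h => hc₀ (h ▸ h0)
      exact cntIoc_lt (w := c₀) (fun x hx h => hx (hsub x h)) (by omega) hc₀n
        (fun h => h (hCsC1 c₀ hc₀s)) hc₀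
    obtain ⟨m, hm1, hmn, hmC1, hz, hcount⟩ := ih (B ∪ Bs) (β + 1) (Or.inl hB) hn1 hk1 (by
      intro c c' a b hc hcn hc' hcn' ha hb h
      have hcC : c ∉ A + B := fun h => hc (hsub c h)
      have hcC' : c' ∉ A + B := fun h => hc' (hsub c' h)
      rcases hb with hb | hb
      · have h1 := hβmin c c' a b hcC hcn hcC' hcn' ha hb h
        have h2 : b ≠ β := by
          rintro rfl
          exact hc (hCsC1 c ⟨hcC, hcn, c', hcC', hcn', a, ha, h⟩)
        omega
      · exact hBs_gt b hb)
    have hmC : m ∉ A + B := fun h => hmC1 (hsub m h)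
    -- Elements of `B*` exceed `β`, so they do not contribute to sums that are at most `β`.
    have hz' : ∀ z < m, z ≤ β → z ∈ A + B := by
      intro z hzm hzβ
      obtain ⟨a, ha, b, hb | hb, hab⟩ := Set.mem_add.1 (hz z hzm (by omega))
      · exact Set.mem_add.2 ⟨a, ha, b, hb, hab⟩
      · have := hBs_gt b hb
        omega
    refine ⟨m, hm1, hmn, hmC, fun z h1 h2 => hz' z h1 (by omega), ?_⟩
    -- The reflection `c ↦ n + β - c` maps `C* ∩ (n - m, n]` into `B* ∩ (0, m]`.
    have hCB : cntIoc Cs (n - m) n ≤ cntIoc Bs 0 m := by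
      apply Finset.card_le_card_of_injOn (fun c => n + β - c)
      · intro c hc
        simp only [Finset.coe_filter, Finset.mem_Ioc, Set.mem_ofPred_eq] at hc ⊢
        obtain ⟨⟨hc1, hc2⟩, hcs⟩ := hc
        have hcn : c ≠ n := fun h => hnCs (h ▸ hcs)
        refine ⟨⟨by omega, ?_⟩, c, hcs, by omega⟩
        by_contra hlt
        obtain ⟨a, ha, b, hb, hab⟩ := Set.mem_add.1 (hz' (m + c - n) (by omega) (by omega))
        have := hβmin m c a b hmC hmn hcs.1 hc2 ha hb (by omega)
        omega
      · intro x hx y hy hxy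
        simp only [Finset.coe_filter, Finset.mem_Ioc, Set.mem_ofPred_eq] at hx hy hxy
        omega
    have e1 := cntIoc_union_of_disjoint 0 m hBBs
    have e2 := cntIoc_union_le (A + B) Cs (n - m) n
    have e3 : cntIoc (A + (B ∪ Bs)) (n - m) n ≤ cntIoc ((A + B) ∪ Cs) (n - m) n :=
      cntIoc_mono fun z _ hzn h => hC1 z hzn h
    omega

theorem exists_gap_interval_count {A B : Set ℕ} (hA : 0 ∈ A) (hB : 0 ∈ B) {n : ℕ}
    (hn : n ∉ A + B) :
    ∃ m, 1 ≤ m ∧ m ≤ n ∧ m ∉ A + B ∧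
      cntIoc A 0 m + cntIoc B 0 m ≤ cntIoc (A + B) (n - m) n := by
  obtain ⟨m, h1, h2, h3, _, h4⟩ := exists_gap_aux hA n _ B 0 hB hn le_rfl
    (fun _ _ _ b _ _ _ _ _ _ _ => Nat.zero_le b)
  exact ⟨m, h1, h2, h3, h4⟩

theorem count_eq_cntIoc (S : Set ℕ) (x : ℕ) : count S x = cntIoc S 0 x := by
  classical
  unfold count cntIoc
  rw [← Set.ncard_coe_finset]
  congr 1
  ext z
  simp only [Set.mem_inter_iff, Set.mem_Icc, Finset.coe_filter, Finset.mem_Ioc, Set.mem_ofPred_eq]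
  constructor
  · rintro ⟨h1, h2, h3⟩
    exact ⟨⟨by omega, h3⟩, h1⟩
  · rintro ⟨⟨h2, h3⟩, h1⟩
    exact ⟨h1, by omega, h3⟩

theorem cntIoc_zero_add (S : Set ℕ) {x y : ℕ} (h : x ≤ y) :
    cntIoc S 0 x + cntIoc S x y = cntIoc S 0 y := by
  classical
  unfold cntIoc
  rw [← Finset.Ioc_union_Ioc_eq_Ioc (Nat.zero_le x) h, Finset.filter_union,
    Finset.card_union_of_disjoint]
  rw [Finset.disjoint_left]
  intro z hz hz'
  simp only [Finset.mem_filter, Finset.mem_Ioc] at hz hz'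
  omega

theorem cntIoc_union_zero (S : Set ℕ) (x : ℕ) : cntIoc (S ∪ {0}) 0 x = cntIoc S 0 x := by
  apply le_antisymm
  · apply cntIoc_mono
    rintro z hz _ (h | h)
    · exact h
    · rw [Set.mem_singleton_iff] at h
      omega
  · exact cntIoc_mono fun z _ _ h => Or.inl h

theorem cntIoc_pred_of_mem {S : Set ℕ} {x : ℕ} (h : x + 1 ∈ S) :
    cntIoc S 0 (x + 1) = cntIoc S 0 x + 1 := by
  classical
  rw [← cntIoc_zero_add S (Nat.le_succ x)]
  unfold cntIoc
  simp [Finset.filter_singleton, h]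

theorem sumset_eq_add (A B : Set ℕ) : sumset A B = (A ∪ {0}) + (B ∪ {0}) := by
  ext x
  simp only [sumset, Set.mem_add, Set.mem_ofPred_eq, eq_comm]

/-- Mann's Fundamental Theorem: for sets `A`, `B` of positive integers with
`C = A + B` and any positive integer `n`, either `C(n)/n = 1` or
`C(n)/n ≥ min_{1 ≤ m ≤ n, m ∉ C} (A(m) + B(m))/m`. -/
theorem mann_fundamental_theorem (A B : Set ℕ)
    (hA : ∀ a ∈ A, 0 < a) (hB : ∀ b ∈ B, 0 < b)
    (C : Set ℕ) (hC : C = sumset A B) (n : ℕ) (hn : 0 < n) :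
    (count C n : ℝ) / n = 1 ∨
      ∃ m : ℕ, 1 ≤ m ∧ m ≤ n ∧ m ∉ C ∧
        ((count A m : ℝ) + (count B m : ℝ)) / m ≤ (count C n : ℝ) / n := by
  classical
  have hCeq : C = (A ∪ {0}) + (B ∪ {0}) := hC.trans (sumset_eq_add A B)
  have hn' : (0 : ℝ) < n := by exact_mod_cast hn
  by_contra hcon
  push Not at hcon
  obtain ⟨hne, hall⟩ := hcon
  set γ : ℝ := (count C n : ℝ) / n with hγ
  have hle : count C n ≤ n := by
    rw [count_eq_cntIoc]
    refine (Finset.card_filter_le _ _).trans ?_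
    simp
  have hγ1 : γ < 1 := by
    refine lt_of_le_of_ne ?_ hne
    rw [hγ, div_le_one hn']
    exact_mod_cast hle
  have key : ∀ k : ℕ, k ≤ n → γ * k ≤ count C k ∧ (1 ≤ k → γ * k < count C k) := by
    intro k
    induction k using Nat.strong_induction_on with
    | _ k ih =>
      intro hkn
      rcases Nat.eq_zero_or_pos k with rfl | hk
      · simp
      suffices h : γ * k < count C k from ⟨h.le, fun _ => h⟩
      by_cases hkC : k ∈ C
      · obtain ⟨j, rfl⟩ : ∃ j, k = j + 1 := ⟨k - 1, by omega⟩
        have h1 := (ih j (by omega) (by omega)).1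
        rw [count_eq_cntIoc] at h1 ⊢
        rw [cntIoc_pred_of_mem hkC]
        push_cast
        linarith
      · obtain ⟨m, hm1, hmk, hmC, hc⟩ := exists_gap_interval_count
          (A := A ∪ {0}) (B := B ∪ {0}) (Or.inr rfl) (Or.inr rfl) (hCeq ▸ hkC)
        rw [← hCeq] at hmC hc
        rw [cntIoc_union_zero, cntIoc_union_zero, ← count_eq_cntIoc, ← count_eq_cntIoc] at hc
        have h1 := hall m hm1 (by omega) hmC
        have hm0 : (0 : ℝ) < m := by exact_mod_cast hm1
        rw [lt_div_iff₀ hm0] at h1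
        have h2 := (ih (k - m) (by omega) (by omega)).1
        rw [Nat.cast_sub hmk] at h2
        have h3 := cntIoc_zero_add C (Nat.sub_le k m)
        rw [← count_eq_cntIoc, ← count_eq_cntIoc] at h3
        have h4 : ((count A m : ℝ) + count B m) + count C (k - m) ≤ count C k := by
          exact_mod_cast (by omega : count A m + count B m + count C (k - m) ≤ count C k)
        linarith
  have h := (key n le_rfl).2 hn
  rw [hγ, div_mul_cancel₀ _ hn'.ne'] at h
  exact lt_irrefl _ h
end

section
/- Let A and B be sets of positive integers, let C = A + B, let n be a positive integer, and let γ be a real number. If A(m) + B(m) ≥ γ·m for all m = 1, …, n, then C(n) ≥ min(1, γ)·n. -/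
/-- The number of positive elements of a finite set that are at most `m`. -/
def cnt (S : Finset ℕ) (m : ℕ) : ℕ := (S.filter (fun x => 1 ≤ x ∧ x ≤ m)).card

lemma cnt_eq_zero {S : Finset ℕ} {m : ℕ} (h : ∀ b ∈ S, 1 ≤ b → ¬ b ≤ m) : cnt S m = 0 := by
  unfold cnt
  rw [Finset.card_eq_zero, Finset.filter_eq_empty_iff]
  rintro b hb ⟨h1, h2⟩
  exact h b hb h1 h2

/-- The summand `1` accounts for `b + 0`. -/
lemma cnt_shift {A : Finset ℕ} {b m : ℕ} (h0 : 0 ∈ A) (hb : 1 ≤ b) (hbm : b ≤ m)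
    (h : ∀ a ∈ A, a + b ≤ m → a + b ∈ A) :
    cnt A (b - 1) + (cnt A (m - b) + 1) ≤ cnt A m := by
  classical
  have e1 : cnt A (m - b) + 1
      = ((insert 0 (A.filter (fun x => 1 ≤ x ∧ x ≤ m - b))).image (fun x => x + b)).card := by
    rw [Finset.card_image_of_injective _ (add_left_injective b), Finset.card_insert_of_notMem]
    · rfl
    · simp
  rw [e1]
  unfold cnt
  rw [← Finset.card_union_of_disjoint]
  · apply Finset.card_le_card
    intro x hx
    simp only [Finset.mem_union, Finset.mem_filter, Finset.mem_image, Finset.mem_insert] at hx ⊢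
    rcases hx with ⟨hx, h1, h2⟩ | ⟨a, rfl | ⟨ha, h1, h2⟩, rfl⟩
    · exact ⟨hx, h1, by omega⟩
    · exact ⟨h 0 h0 (by omega), by omega, by omega⟩
    · exact ⟨h a ha (by omega), by omega, by omega⟩
  · rw [Finset.disjoint_left]
    intro x hx hx'
    simp only [Finset.mem_filter, Finset.mem_image] at hx hx'
    obtain ⟨a, -, rfl⟩ := hx'
    omega

/-- If `A + B` stays inside `A` up to `k`, then `A` alone satisfies the stronger density bound
`|A ∩ [0, k]| ≥ γ (k + 1)`: a positive `b ∈ B` splits `[0, k]` into `[0, b - 1]` and a translate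
of `[0, k - b]`, and if there is none, then `B` contributes nothing to the hypothesis at `k`. -/
lemma low_density {A B : Finset ℕ} {n : ℕ} {γ : ℝ} (h0 : 0 ∈ A) (hγ : γ ≤ 1)
    (h : ∀ m ≤ n, γ * m ≤ (cnt A m : ℝ) + cnt B m) (k : ℕ) (hk : k ≤ n)
    (hc : ∀ a ∈ A, ∀ b ∈ B, a + b ≤ k → a + b ∈ A) :
    γ * (k + 1) ≤ (cnt A k : ℝ) + 1 := by
  induction k using Nat.strong_induction_on with
  | _ k ih =>
    by_cases hb : ∃ b ∈ B, 1 ≤ b ∧ b ≤ k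
    · obtain ⟨b, hbB, hb1, hbk⟩ := hb
      have i1 := ih (b - 1) (by omega) (by omega)
        (fun a ha b' hb' hab => hc a ha b' hb' (by omega))
      have i2 := ih (k - b) (by omega) (by omega)
        (fun a ha b' hb' hab => hc a ha b' hb' (by omega))
      have s := cnt_shift h0 hb1 hbk (fun a ha hab => hc a ha b hbB hab)
      have s' : (cnt A (b - 1) : ℝ) + (cnt A (k - b) + 1) ≤ cnt A k := by exact_mod_cast s
      rw [Nat.cast_sub hb1] at i1
      rw [Nat.cast_sub hbk] at i2
      push_cast at i1
      linarith
    · have hz : cnt B k = 0 := cnt_eq_zero (fun b hbB h1 h2 => hb ⟨b, hbB, h1, h2⟩)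
      have := h k hk
      rw [hz] at this
      push_cast at this
      linarith

/-- Dyson's transform at the least admissible `e` preserves the density hypothesis. -/
lemma transform_density {A B B' : Finset ℕ} {n e : ℕ} {γ : ℝ} (h0 : 0 ∈ A) (hγ : γ ≤ 1)
    (h : ∀ m ≤ n, γ * m ≤ (cnt A m : ℝ) + cnt B m)
    (hmin : ∀ a ∈ A, a < e → ∀ b ∈ B, a + b ≤ n → a + b ∈ A)
    (hB' : B' ⊆ B) (hnew : ∀ b ∈ B', e + b ∉ A) (m : ℕ) (hm : m ≤ n) :
    γ * m ≤ (cnt (A ∪ B'.image (fun b => e + b)) m : ℝ) + cnt (B \ B') m := by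
  classical
  have c1 : cnt A m + cnt B' (m - e) ≤ cnt (A ∪ B'.image (fun b => e + b)) m := by
    have e1 : cnt B' (m - e)
        = ((B'.filter (fun x => 1 ≤ x ∧ x ≤ m - e)).image (fun b => e + b)).card := by
      rw [Finset.card_image_of_injective _ (add_right_injective e)]
      rfl
    rw [e1]
    unfold cnt
    rw [← Finset.card_union_of_disjoint]
    · apply Finset.card_le_card
      intro x hx
      simp only [Finset.mem_union, Finset.mem_filter, Finset.mem_image] at hx ⊢
      rcases hx with ⟨hx, h1, h2⟩ | ⟨b, ⟨hb, h1, h2⟩, rfl⟩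
      · exact ⟨Or.inl hx, h1, h2⟩
      · exact ⟨Or.inr ⟨b, hb, rfl⟩, by omega, by omega⟩
    · rw [Finset.disjoint_left]
      intro x hx hx'
      simp only [Finset.mem_filter, Finset.mem_image] at hx hx'
      obtain ⟨b, ⟨hb, -⟩, rfl⟩ := hx'
      exact hnew b hb hx.1
  -- An initial segment of `B` missing `B' ∩ (m - e, m]` is counted in full after the transform.
  have c2 : ∀ t ≤ m, (∀ b ∈ B', m - e < b → ¬ b ≤ t) →
      cnt B t ≤ cnt (B \ B') m + cnt B' (m - e) := by
    intro t ht hno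
    unfold cnt
    refine le_trans (Finset.card_le_card ?_) (Finset.card_union_le _ _)
    intro x hx
    simp only [Finset.mem_union, Finset.mem_filter, Finset.mem_sdiff] at hx ⊢
    obtain ⟨hx, h1, h2⟩ := hx
    by_cases hxB : x ∈ B'
    · right
      refine ⟨hxB, h1, ?_⟩
      by_contra hlt
      exact hno x hxB (by omega) h2
    · exact Or.inl ⟨⟨hx, hxB⟩, h1, by omega⟩
  by_cases hex : ∃ b, b ∈ B' ∧ m - e < b ∧ b ≤ m
  · obtain ⟨hb, hb1, hb2⟩ := Nat.find_spec hex
    have hleast : ∀ c < Nat.find hex, ¬ (c ∈ B' ∧ m - e < c ∧ c ≤ m) :=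
      fun c hc => Nat.find_min hex hc
    generalize Nat.find hex = b at *
    have d2 := c2 (b - 1) (by omega)
      (fun c hc h1 h2 => hleast c (by omega) ⟨hc, h1, by omega⟩)
    have s := cnt_shift h0 (by omega) hb2
      (fun a ha hab => hmin a ha (by omega) b (hB' hb) (by omega))
    have l := low_density h0 hγ h (m - b) (by omega)
      (fun a ha c hc hac => hmin a ha (by omega) c hc (by omega))
    have g := h (b - 1) (by omega)
    have hb0 : 1 ≤ b := by omega
    rw [Nat.cast_sub hb2] at l
    rw [Nat.cast_sub hb0] at g
    push_cast at g
    have tot : (cnt A (b - 1) : ℝ) + cnt B (b - 1) + (cnt A (m - b) + 1)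
        ≤ (cnt (A ∪ B'.image (fun b => e + b)) m : ℝ) + cnt (B \ B') m := by
      have : cnt A (b - 1) + cnt B (b - 1) + (cnt A (m - b) + 1)
        ≤ cnt (A ∪ B'.image (fun b => e + b)) m + cnt (B \ B') m := by omega
      exact_mod_cast this
    linarith
  · have d2 := c2 m le_rfl (fun c hc h1 h2 => hex ⟨c, hc, h1, h2⟩)
    have g := h m hm
    have tot : (cnt A m : ℝ) + cnt B m
        ≤ (cnt (A ∪ B'.image (fun b => e + b)) m : ℝ) + cnt (B \ B') m := by
      have : cnt A m + cnt B m
        ≤ cnt (A ∪ B'.image (fun b => e + b)) m + cnt (B \ B') m := by omega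
      exact_mod_cast this
    linarith

/-- Mann's inequality for finite sets containing `0`; `C` may be any set that contains all sums
up to `n`, so that the induction can keep it fixed. -/
lemma mann_finite (n : ℕ) (γ : ℝ) (hγ : γ ≤ 1) (C : Finset ℕ) (N : ℕ) :
    ∀ A B : Finset ℕ, B.card = N → 0 ∈ A → 0 ∈ B →
      (∀ m ≤ n, γ * m ≤ (cnt A m : ℝ) + cnt B m) →
      (∀ a ∈ A, ∀ b ∈ B, a + b ≤ n → a + b ∈ C) → γ * n ≤ (cnt C n : ℝ) := by
  classical
  induction N using Nat.strong_induction_on with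
  | _ N ih =>
    intro A B hN hA hB h hC
    by_cases hex : ∃ e, e ∈ A ∧ ∃ b ∈ B, e + b ≤ n ∧ e + b ∉ A
    · obtain ⟨he, b₀, hb₀, hb₀n, hb₀A⟩ := Nat.find_spec hex
      have hleast : ∀ c < Nat.find hex, ¬ (c ∈ A ∧ ∃ b ∈ B, c + b ≤ n ∧ c + b ∉ A) :=
        fun c hc => Nat.find_min hex hc
      generalize Nat.find hex = e at *
      set B' := B.filter (fun b => e + b ≤ n ∧ e + b ∉ A) with hB'
      have hsub : B' ⊆ B := Finset.filter_subset _ _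
      have hlt : (B \ B').card < N := by
        rw [← hN]
        apply Finset.card_lt_card
        refine Finset.ssubset_iff_subset_ne.2 ⟨Finset.sdiff_subset, fun heq => ?_⟩
        have hmem : b₀ ∈ B \ B' := by rw [heq]; exact hb₀
        exact (Finset.mem_sdiff.1 hmem).2 (Finset.mem_filter.2 ⟨hb₀, hb₀n, hb₀A⟩)
      refine ih _ hlt (A ∪ B'.image (fun b => e + b)) (B \ B') rfl
        (Finset.mem_union_left _ hA) ?_ ?_ ?_
      · refine Finset.mem_sdiff.2 ⟨hB, fun h0 => ?_⟩
        exact (Finset.mem_filter.1 h0).2.2 he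
      · refine fun m hm => transform_density hA hγ h ?_ hsub
          (fun b hb => (Finset.mem_filter.1 hb).2.2) m hm
        intro a ha hae b hb hab
        by_contra hn
        exact hleast a hae ⟨ha, b, hb, hab, hn⟩
      · intro a ha b hb hab
        obtain ⟨hbB, hbB'⟩ := Finset.mem_sdiff.1 hb
        rcases Finset.mem_union.1 ha with ha | ha
        · exact hC a ha b hbB hab
        · obtain ⟨b', hb', rfl⟩ := Finset.mem_image.1 ha
          -- Since `b ∉ B'`, the sum `(e + b') + b` regroups as `(e + b) + b'` with `e + b ∈ A`.
          have hmem : e + b ∈ A := by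
            by_contra hn
            exact hbB' (Finset.mem_filter.2 ⟨hbB, by omega, hn⟩)
          have := hC (e + b) hmem b' (hsub hb') (by omega)
          rwa [show e + b + b' = e + b' + b by ring] at this
    · have hcl : ∀ a ∈ A, ∀ b ∈ B, a + b ≤ n → a + b ∈ A := by
        intro a ha b hb hab
        by_contra hn
        exact hex ⟨a, ha, b, hb, hab, hn⟩
      have hAC : (cnt A n : ℝ) ≤ cnt C n := by
        have : cnt A n ≤ cnt C n := by
          unfold cnt
          apply Finset.card_le_card
          intro x hx
          simp only [Finset.mem_filter] at hx ⊢
          exact ⟨by simpa using hC x hx.1 0 hB (by omega), hx.2⟩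
        exact_mod_cast this
      refine le_trans ?_ hAC
      by_cases hb : ∃ b, b ∈ B ∧ 1 ≤ b ∧ b ≤ n
      · obtain ⟨hbB, hb1, hbn⟩ := Nat.find_spec hb
        have hleast : ∀ c < Nat.find hb, ¬ (c ∈ B ∧ 1 ≤ c ∧ c ≤ n) :=
          fun c hc => Nat.find_min hb hc
        generalize Nat.find hb = b at *
        have hz : cnt B (b - 1) = 0 :=
          cnt_eq_zero (fun c hc h1 h2 => hleast c (by omega) ⟨hc, h1, by omega⟩)
        have s := cnt_shift hA hb1 hbn (fun a ha hab => hcl a ha b hbB hab)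
        have s' : (cnt A (b - 1) : ℝ) + (cnt A (n - b) + 1) ≤ cnt A n := by exact_mod_cast s
        have l := low_density hA hγ h (n - b) (by omega)
          (fun a ha c hc hac => hcl a ha c hc (by omega))
        have g := h (b - 1) (by omega)
        rw [hz, Nat.cast_sub hb1] at g
        rw [Nat.cast_sub hbn] at l
        push_cast at g
        linarith
      · have hz : cnt B n = 0 := cnt_eq_zero (fun c hc h1 h2 => hb ⟨c, hc, h1, h2⟩)
        have := h n le_rfl
        rw [hz] at this
        simpa using this

/-- Truncating to `[0, n]` and adjoining or removing `0` does not affect the count up to `m ≤ n`. -/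
lemma cnt_trunc (S T : Set ℕ) [DecidablePred (fun x => x ∈ T)] (n m : ℕ)
    (hm : m ≤ n) (hST : ∀ x, 1 ≤ x → (x ∈ T ↔ x ∈ S)) :
    cnt ((Finset.range (n + 1)).filter (fun x => x ∈ T)) m = count S m := by
  unfold cnt count
  rw [← Set.ncard_coe_finset]
  congr 1
  ext x
  simp only [Finset.coe_filter, Finset.mem_filter, Finset.mem_range, Set.mem_ofPred_eq,
    Set.mem_inter_iff, Set.mem_Icc]
  constructor
  · rintro ⟨⟨-, h1⟩, h2⟩
    exact ⟨(hST x h2.1).1 h1, h2⟩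
  · rintro ⟨h1, h2⟩
    exact ⟨⟨by omega, (hST x h2.1).2 h1⟩, h2⟩

/-- If `A(m) + B(m) ≥ γ·m` for all `m = 1, …, n`, then
`C(n) ≥ min(1, γ)·n`, where `C = A + B`. -/
theorem mann_corollary (A B : Set ℕ)
    (hA : ∀ a ∈ A, 0 < a) (hB : ∀ b ∈ B, 0 < b)
    (C : Set ℕ) (hC : C = sumset A B) (n : ℕ) (hn : 0 < n) (γ : ℝ)
    (h : ∀ m : ℕ, 1 ≤ m → m ≤ n → γ * m ≤ (count A m : ℝ) + (count B m : ℝ)) :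
    min 1 γ * n ≤ (count C n : ℝ) := by
  classical
  have key : ∀ S : Set ℕ, ∀ x, 1 ≤ x → (x ∈ S ∪ {0} ↔ x ∈ S) := by
    intro S x hx
    have : x ≠ 0 := by omega
    simp [this]
  rw [← cnt_trunc C C n n le_rfl (fun _ _ => Iff.rfl)]
  refine mann_finite n (min 1 γ) (min_le_left _ _) _ _
    ((Finset.range (n + 1)).filter (fun x => x ∈ A ∪ {0}))
    ((Finset.range (n + 1)).filter (fun x => x ∈ B ∪ {0})) rfl ?_ ?_ ?_ ?_
  · simp
  · simp
  · intro m hm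
    rw [cnt_trunc A _ n m hm (key A), cnt_trunc B _ n m hm (key B)]
    rcases Nat.eq_zero_or_pos m with rfl | hpos
    · simp only [Nat.cast_zero, mul_zero]
      positivity
    · exact le_trans (mul_le_mul_of_nonneg_right (min_le_right _ _) (Nat.cast_nonneg m))
        (h m hpos hm)
  · intro a ha b hb hab
    rw [Finset.mem_filter] at ha hb ⊢
    refine ⟨Finset.mem_range.2 (by omega), ?_⟩
    rw [hC]
    exact ⟨a, ha.2, b, hb.2, rfl⟩
end

section
/- Let A and B be sets of positive integers. If σ(A) = α and σ(B) = β, then σ(A + B) ≥ min(1, α + β). -/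
/-- The Shnirel'man density of a set of integers: `σ(A) = inf_{n ≥ 1} A(n)/n`. -/
noncomputable def shnirelmann (A : Set ℕ) : ℝ :=
  ⨅ n : ℕ+, (count A n : ℝ) / ((n : ℕ) : ℝ)

lemma count_le_count {A B : Set ℕ} {m k : ℕ}
    (h : ∀ x ∈ A, 1 ≤ x → x ≤ m → x ∈ B ∧ x ≤ k) : count A m ≤ count B k := by
  refine Set.ncard_le_ncard ?_ ((Set.finite_Icc 1 k).inter_of_right _)
  rintro x ⟨hx, h1, h2⟩
  exact ⟨(h x hx h1 h2).1, h1, (h x hx h1 h2).2⟩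

lemma count_union_le (A B : Set ℕ) (m : ℕ) : count (A ∪ B) m ≤ count A m + count B m := by
  unfold count
  rw [Set.union_inter_distrib_right]
  exact Set.ncard_union_le _ _

lemma count_lt_count {A B : Set ℕ} {m b : ℕ} (h : A ⊆ B) (hb : b ∈ B) (hb' : b ∉ A)
    (h1 : 1 ≤ b) (hm : b ≤ m) : count A m < count B m := by
  refine Set.ncard_lt_ncard ?_ ((Set.finite_Icc 1 m).inter_of_right _)
  refine ⟨Set.inter_subset_inter_left _ h, fun hs => hb' (hs ⟨hb, h1, hm⟩).1⟩

/-- The elements of `A` up to `k` and the translates `e + b` of the elements `b` of `M` up to `t`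
are distinct elements of `A'`, all at most `m`. -/
lemma count_add_count_le {A M A' : Set ℕ} {k m t e : ℕ}
    (hA : ∀ x ∈ A, 1 ≤ x → x ≤ k → x ∈ A' ∧ x ≤ m)
    (hM : ∀ b ∈ M, 1 ≤ b → b ≤ t → e + b ∈ A' ∧ e + b ≤ m ∧ (e + b ∈ A → k < e + b)) :
    count A k + count M t ≤ count A' m := by
  unfold count
  have hinj : Function.Injective (fun b : ℕ => e + b) := fun x y h => by simpa using h
  rw [← Set.ncard_image_of_injective (M ∩ Set.Icc 1 t) hinj, ← Set.ncard_union_eq ?_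
    ((Set.finite_Icc 1 k).inter_of_right _) (((Set.finite_Icc 1 t).inter_of_right _).image _)]
  · refine Set.ncard_le_ncard ?_ ((Set.finite_Icc 1 m).inter_of_right _)
    rintro x (⟨hx, h1, h2⟩ | ⟨b, ⟨hb, h1, h2⟩, rfl⟩)
    · exact ⟨(hA x hx h1 h2).1, h1, (hA x hx h1 h2).2⟩
    · obtain ⟨h3, h4, -⟩ := hM b hb h1 h2
      exact ⟨h3, le_add_left h1, h4⟩
  · rw [Set.disjoint_left]
    rintro _ ⟨hx, -, h3⟩ ⟨b, ⟨hb, h1, h2⟩, rfl⟩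
    exact absurd ((hM b hb h1 h2).2.2 hx) (not_lt.mpr h3)

/-- If `A` contains `b + a` for each `a ∈ A` up to `m - b`, including `a = 0`, then
`A(m) ≥ A(b - 1) + 1 + A(m - b)`. -/
lemma count_shift {A : Set ℕ} {m b : ℕ} (h0 : 0 ∈ A) (hb : 1 ≤ b) (hbm : b ≤ m)
    (h : ∀ a ∈ A, a ≤ m - b → b + a ∈ A) :
    count A (b - 1) + 1 + count A (m - b) ≤ count A m := by
  have h1 : count A (b - 1) < count A b := by
    have : count (A \ {b}) b < count A b :=
      count_lt_count (b := b) Set.sdiff_subset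
        (by simpa using h 0 h0 (Nat.zero_le _)) (by simp) hb le_rfl
    have hle : count A (b - 1) ≤ count (A \ {b}) b :=
      count_le_count fun x hx hx1 hx2 =>
        ⟨⟨hx, by simp only [Set.mem_singleton_iff]; omega⟩, by omega⟩
    omega
  have h2 : count A b + count A (m - b) ≤ count A m :=
    count_add_count_le (e := b) (fun x hx _ h2 => ⟨hx, by omega⟩)
      (fun a ha h1 h2 => ⟨h a ha h2, by omega, fun _ => by omega⟩)
  omega

/-- Bounds on `[1, b - 1]` and on a block of length `m - b` miss one point of `[1, m]`; the gain
of `1` pays for it because `γ ≤ 1`. -/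
lemma le_of_split {γ : ℝ} (hγ : γ ≤ 1) {m b : ℕ} (hb : 1 ≤ b) (hbm : b ≤ m) {x y z : ℕ}
    {u : ℝ} (hu : γ * ((b - 1 : ℕ) : ℝ) ≤ u) (hy : γ * ((m - b : ℕ) : ℝ) ≤ y)
    (hz : u + 1 + y ≤ (z : ℝ) + x) : γ * (m : ℝ) ≤ (z : ℝ) + x := by
  rw [Nat.cast_sub hb] at hu
  rw [Nat.cast_sub hbm] at hy
  push_cast at hu
  nlinarith

/-- The finite form of the `α + β` theorem, for sets containing `0`. The auxiliary `k` carries the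
inner induction on `B(n)`. Letting `C` be any set containing the sums up to `n` allows the choice
`C = A` for smaller `n`. -/
lemma le_count_of_add_mem {γ : ℝ} (hγ : γ ≤ 1) (n : ℕ) : ∀ (k : ℕ) (A B C : Set ℕ),
    count B n = k → 0 ∈ A → 0 ∈ B → (∀ a ∈ A, ∀ b ∈ B, a + b ≤ n → a + b ∈ C) →
    (∀ m ≤ n, γ * (m : ℝ) ≤ (count A m : ℝ) + count B m) → γ * (n : ℝ) ≤ count C n := by
  induction n using Nat.strong_induction_on with
  | _ n ihn =>
  intro k
  induction k using Nat.strong_induction_on with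
  | _ k ihk =>
  intro A B C hk hA0 hB0 hC hm
  have hAC : count A n ≤ count C n :=
    count_le_count fun x hx _ h2 => ⟨by simpa using hC x hx 0 hB0 h2, h2⟩
  by_cases hcl : ∃ e, e ∈ A ∧ ∃ b ∈ B, e + b ≤ n ∧ e + b ∉ A
  · classical
    obtain ⟨e, ⟨heA, b₁, hb₁, hb₁n, hb₁A⟩, hmin⟩ :
        ∃ e, (e ∈ A ∧ ∃ b ∈ B, e + b ≤ n ∧ e + b ∉ A) ∧
          ∀ a < e, a ∈ A → ∀ b ∈ B, a + b ≤ n → a + b ∈ A := by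
      refine ⟨Nat.find hcl, Nat.find_spec hcl, fun a ha haA b hb hab => ?_⟩
      by_contra hn
      exact Nat.find_min hcl ha ⟨haA, b, hb, hab, hn⟩
    have hAr : ∀ r < e, γ * (r : ℝ) ≤ count A r := fun r hr =>
      ihn r (by omega) _ A B A rfl hA0 hB0
        (fun a ha b hb hab => hmin a (by omega) ha b hb (by omega))
        (fun m hmr => hm m (by omega))
    let M : Set ℕ := {b | b ∈ B ∧ e + b ≤ n ∧ e + b ∉ A}
    let A' : Set ℕ := {x | x ∈ A ∨ ∃ b ∈ M, x = e + b}
    let B' : Set ℕ := {b | b ∈ B ∧ (e + b ≤ n → e + b ∈ A)}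
    have hMpos : ∀ b ∈ M, 1 ≤ b := by
      rintro b ⟨-, -, hb⟩
      rcases Nat.eq_zero_or_pos b with rfl | h
      · exact absurd heA hb
      · exact h
    have hlt : count B' n < k := by
      rw [← hk]
      exact count_lt_count (b := b₁) (fun b hb => hb.1) hb₁ (fun h => hb₁A (h.2 hb₁n))
        (hMpos b₁ ⟨hb₁, hb₁n, hb₁A⟩) (by omega)
    -- Up to `t`, every removed `b` is compensated by the new element `e + b ≤ m`.
    have hcomp : ∀ m t, t ≤ m → (∀ b ∈ M, b ≤ t → e + b ≤ m) →
        count A m + count B t ≤ count A' m + count B' m := by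
      intro m t htm ht
      have h1 : count A m + count M t ≤ count A' m :=
        count_add_count_le (e := e) (fun x hx _ h2 => ⟨Or.inl hx, h2⟩)
          (fun b hb _ h2 => ⟨Or.inr ⟨b, hb, rfl⟩, ht b hb h2, fun h => absurd h hb.2.2⟩)
      have h2 : count B t ≤ count (M ∪ B') t := by
        refine count_le_count fun x hx _ h2 => ⟨?_, h2⟩
        by_cases hx' : e + x ≤ n → e + x ∈ A
        · exact Or.inr ⟨hx, hx'⟩
        · push Not at hx'
          exact Or.inl ⟨hx, hx'⟩
      have h3 := count_union_le M B' t
      have h4 : count B' t ≤ count B' m := count_le_count fun x hx _ h2 => ⟨hx, by omega⟩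
      omega
    refine ihk _ hlt A' B' C rfl (Or.inl hA0) ⟨hB0, fun _ => heA⟩ ?_ ?_
    · rintro x (hx | ⟨b, hb, rfl⟩) b' hb' hsum
      · exact hC x hx b' hb'.1 hsum
      · have := hC (e + b') (hb'.2 (by omega)) b hb.1 (by omega)
        rwa [add_right_comm] at this
    · intro m hmn
      by_cases hloss : ∃ b, b ∈ M ∧ b ≤ m ∧ m < e + b
      · obtain ⟨b₀, ⟨hb₀M, hb₀m, hb₀e⟩, hb₀min⟩ :
            ∃ b₀, (b₀ ∈ M ∧ b₀ ≤ m ∧ m < e + b₀) ∧ ∀ b < b₀, b ∈ M → e + b ≤ m := by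
          refine ⟨Nat.find hloss, Nat.find_spec hloss, fun b hb hbM => ?_⟩
          by_contra hn
          have := (Nat.find_spec hloss).2.1
          exact Nat.find_min hloss hb ⟨hbM, by omega, by omega⟩
        have hpos := hMpos b₀ hb₀M
        have h1 := hcomp m (b₀ - 1) (by omega) fun b hb hbt => hb₀min b (by omega) hb
        have h2 := count_shift (m := m) hA0 hpos hb₀m fun a ha ham => by
          rw [add_comm]
          exact hmin a (by omega) ha b₀ hb₀M.1 (by omega)
        refine le_of_split hγ hpos hb₀m (hm (b₀ - 1) (by omega)) (hAr (m - b₀) (by omega)) ?_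
        norm_cast
        omega
      · push Not at hloss
        have h1 := hcomp m m le_rfl hloss
        exact (hm m hmn).trans (by exact_mod_cast h1)
  · push Not at hcl
    have hAr : ∀ r < n, γ * (r : ℝ) ≤ count A r := fun r hr =>
      ihn r hr _ A B A rfl hA0 hB0 (fun a ha b hb hab => hcl a ha b hb (by omega))
        (fun m hmr => hm m (by omega))
    by_cases hB : ∃ b ∈ B, 1 ≤ b ∧ b ≤ n
    · obtain ⟨b, hb, hb1, hbn⟩ := hB
      have h2 := count_shift (m := n) hA0 hb1 hbn fun a ha ham => by
        rw [add_comm]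
        exact hcl a ha b hb (by omega)
      have h3 := le_of_split hγ hb1 hbn (x := 0) (z := count C n)
        (hAr (b - 1) (by omega)) (hAr (n - b) (by omega)) (by norm_cast; omega)
      simpa using h3
    · push Not at hB
      have h0 : count B n = 0 := by
        have h1 : count B n ≤ count ∅ n :=
          count_le_count fun x hx h1 h2 => absurd (hB x hx h1) (by omega)
        simpa [count] using h1
      have h1 := hm n le_rfl
      rw [h0, Nat.cast_zero, add_zero] at h1
      exact h1.trans (by exact_mod_cast hAC)

lemma shnirelmann_mul_le_count (A : Set ℕ) (m : ℕ) : shnirelmann A * (m : ℝ) ≤ count A m := by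
  rcases Nat.eq_zero_or_pos m with rfl | hm
  · simp
  have hbdd : BddBelow (Set.range fun n : ℕ+ => (count A n : ℝ) / ((n : ℕ) : ℝ)) :=
    ⟨0, by rintro _ ⟨n, rfl⟩; positivity⟩
  have h := ciInf_le hbdd (⟨m, hm⟩ : ℕ+)
  exact (le_div_iff₀ (by exact_mod_cast hm)).mp h

/-- The Mann α+β theorem: if `A` and `B` are sets of positive integers with
`σ(A) = α` and `σ(B) = β`, then `σ(A + B) ≥ min(1, α + β)`. -/
theorem mann_alpha_beta (A B : Set ℕ)
    (hA : ∀ a ∈ A, 0 < a) (hB : ∀ b ∈ B, 0 < b) (α β : ℝ)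
    (hα : shnirelmann A = α) (hβ : shnirelmann B = β) :
    min 1 (α + β) ≤ shnirelmann (sumset A B) := by
  refine le_ciInf fun n => ?_
  rw [le_div_iff₀ (by exact_mod_cast n.pos)]
  refine le_count_of_add_mem (min_le_left _ _) n _ (A ∪ {0}) (B ∪ {0}) _ rfl (by simp) (by simp)
    (fun a ha b hb _ => ⟨a, ha, b, hb, rfl⟩) fun m _ => ?_
  have h1 := shnirelmann_mul_le_count A m
  have h2 := shnirelmann_mul_le_count B m
  rw [hα] at h1
  rw [hβ] at h2
  have h3 : (count A m : ℝ) ≤ count (A ∪ {0}) m := by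
    exact_mod_cast count_le_count fun x hx _ h => ⟨Or.inl hx, h⟩
  have h4 : (count B m : ℝ) ≤ count (B ∪ {0}) m := by
    exact_mod_cast count_le_count fun x hx _ h => ⟨Or.inl hx, h⟩
  have h5 : min 1 (α + β) * (m : ℝ) ≤ (α + β) * m := by
    gcongr
    exact min_le_right _ _
  linarith
end

section
/- Let A₁, …, A_n be sets of positive integers, let g be a positive integer, and let γ be a real number. For r = 1, …, n, let φ_r(m) = Σ_{I} S_I(m), where the sum is over all r-element subsets I = {i₁, …, i_r} of {1, …, n} and S_I = A_{i₁} + ⋯ + A_{i_r}. If φ₁(m) ≥ γ·m for all m = 1, …, g, then φ_r(m) ≥ C(n−1, r−1)·min(1, γ)·m for all m = 1, …, g and all r = 1, …, n, where C(n−1, r−1) denotes the binomial coefficient. -/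
/-- The sumset `S_I = Σ_{i ∈ I} A_i` of the sets `A_i` for `i ∈ I`:
all integers of the form `Σ_{i ∈ I} a_i` with `a_i ∈ A_i ∪ {0}` for all `i ∈ I`. -/
def indexSumset {n : ℕ} (A : Fin n → Set ℕ) (I : Finset (Fin n)) : Set ℕ :=
  {x | ∃ f : Fin n → ℕ, (∀ i ∈ I, f i ∈ A i ∪ {0}) ∧ x = ∑ i ∈ I, f i}

/-- The rank `r` counting function `φ_r(m) = Σ_{|I| = r} S_I(m)`, where the
sum is over all `r`-element subsets `I` of `{1, …, n}`. -/
noncomputable def phi {n : ℕ} (A : Fin n → Set ℕ) (r m : ℕ) : ℕ :=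
  ∑ I ∈ Finset.powersetCard r (Finset.univ : Finset (Fin n)),
    count (indexSumset A I) m

open scoped Pointwise

namespace Dyson

open Classical in
/-- The number of elements of `A` in `[1, m]`, as the cardinality of a `Finset`. -/
noncomputable def cnt (A : Set ℕ) (m : ℕ) : ℕ := ((Finset.Icc 1 m).filter (· ∈ A)).card

/-- The elements `b` of `B` such that `b + e` is missing from `A` although `b + e ≤ g`. -/
def bad (g e : ℕ) (A B : Set ℕ) : Set ℕ := {b | b ∈ B ∧ b + e ∉ A ∧ b + e ≤ g}

/-- The first component of Dyson's transform of `(A, B)`: `A` enlarged by `bad g e A B + e`. -/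
def up (g e : ℕ) (A B : Set ℕ) : Set ℕ := A ∪ {x | ∃ b ∈ bad g e A B, x = b + e}

/-- The second component of Dyson's transform of `(A, B)`: `B` without `bad g e A B`. -/
def down (g e : ℕ) (A B : Set ℕ) : Set ℕ := B \ bad g e A B

/-! ### Counting elements -/

theorem count_eq_cnt (A : Set ℕ) (m : ℕ) : count A m = cnt A m := by
  classical
  unfold count cnt
  rw [← Set.ncard_coe_finset]
  congr 1
  ext x
  simp only [Set.mem_inter_iff, Set.mem_Icc, Finset.coe_filter, Finset.mem_Icc,
    Set.mem_ofPred_eq]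
  tauto

theorem cnt_le_of {A B : Set ℕ} {m : ℕ} (h : ∀ x, 1 ≤ x → x ≤ m → x ∈ A → x ∈ B) :
    cnt A m ≤ cnt B m := by
  classical
  unfold cnt
  apply Finset.card_le_card
  intro x
  simp only [Finset.mem_filter, Finset.mem_Icc]
  rintro ⟨⟨h1, h2⟩, h3⟩
  exact ⟨⟨h1, h2⟩, h x h1 h2 h3⟩

theorem cnt_diff_add {A B : Set ℕ} (h : B ⊆ A) (m : ℕ) : cnt (A \ B) m + cnt B m = cnt A m := by
  classical
  unfold cnt
  rw [← Finset.card_union_of_disjoint]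
  · congr 1
    ext x
    have := @h x
    simp only [Finset.mem_union, Finset.mem_filter, Set.mem_sdiff]
    tauto
  · rw [Finset.disjoint_left]
    intro x
    simp only [Finset.mem_filter, Set.mem_sdiff]
    tauto

theorem cnt_mono_right {A : Set ℕ} {m k : ℕ} (h : m ≤ k) : cnt A m ≤ cnt A k := by
  classical
  unfold cnt
  apply Finset.card_le_card
  intro x
  simp only [Finset.mem_filter, Finset.mem_Icc]
  rintro ⟨⟨h1, h2⟩, h3⟩
  exact ⟨⟨h1, by omega⟩, h3⟩

/-- The number of elements in `(k, m]` is monotone in the set. -/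
theorem cnt_interval {A B : Set ℕ} (h : B ⊆ A) {k m : ℕ} (hkm : k ≤ m) :
    cnt B m + cnt A k ≤ cnt A m + cnt B k := by
  have h1 := cnt_diff_add h m
  have h2 := cnt_diff_add h k
  have h3 : cnt (A \ B) k ≤ cnt (A \ B) m := cnt_mono_right hkm
  omega

theorem cnt_eq_of_no_mem {A : Set ℕ} {k m : ℕ} (hkm : k ≤ m)
    (h : ∀ x, k < x → x ≤ m → x ∉ A) : cnt A m = cnt A k := by
  classical
  unfold cnt
  congr 1
  ext x
  simp only [Finset.mem_filter, Finset.mem_Icc]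
  constructor
  · rintro ⟨⟨h1, h2⟩, h3⟩
    refine ⟨⟨h1, ?_⟩, h3⟩
    by_contra hc
    exact h x (by omega) h2 h3
  · rintro ⟨⟨h1, h2⟩, h3⟩
    exact ⟨⟨h1, by omega⟩, h3⟩

theorem cnt_zero (A : Set ℕ) : cnt A 0 = 0 := by
  classical
  simp [cnt]

/-- The elements of `A` in `[1, b - 1]`, the element `b` and the translates `a + b` of the
positive elements `a ≤ m - b` of `A` are distinct elements of `A ∩ [1, m]`. -/
theorem cnt_shift {A : Set ℕ} {b m : ℕ} (h0 : 0 ∈ A) (hb : 1 ≤ b) (hbm : b ≤ m)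
    (h : ∀ a ∈ A, a ≤ m - b → a + b ∈ A) :
    cnt A (b - 1) + 1 + cnt A (m - b) ≤ cnt A m := by
  classical
  have hsub : ((Finset.Icc 1 (b - 1)).filter (· ∈ A)) ∪ ({b} ∪
      ((Finset.Icc 1 (m - b)).filter (· ∈ A)).image (· + b)) ⊆
      (Finset.Icc 1 m).filter (· ∈ A) := by
    intro x
    simp only [Finset.mem_union, Finset.mem_filter, Finset.mem_Icc, Finset.mem_singleton,
      Finset.mem_image]
    rintro (⟨⟨h1, h2⟩, h3⟩ | rfl | ⟨a, ⟨⟨h1, h2⟩, h3⟩, rfl⟩)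
    · exact ⟨⟨h1, by omega⟩, h3⟩
    · exact ⟨⟨hb, hbm⟩, by simpa using h 0 h0 (by omega)⟩
    · exact ⟨⟨by omega, by omega⟩, h a h3 h2⟩
  have hc := Finset.card_le_card hsub
  rw [Finset.card_union_of_disjoint, Finset.card_union_of_disjoint, Finset.card_singleton,
    Finset.card_image_of_injective _ (add_left_injective b)] at hc
  · unfold cnt
    omega
  · rw [Finset.disjoint_left]
    intro x
    simp only [Finset.mem_filter, Finset.mem_Icc, Finset.mem_singleton, Finset.mem_image]
    rintro rfl ⟨a, ⟨⟨h1, h2⟩, h3⟩, h4⟩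
    omega
  · rw [Finset.disjoint_left]
    intro x
    simp only [Finset.mem_union, Finset.mem_filter, Finset.mem_Icc, Finset.mem_singleton,
      Finset.mem_image]
    rintro ⟨⟨h1, h2⟩, h3⟩ (rfl | ⟨a, ⟨⟨h1, h2⟩, h3⟩, h4⟩) <;> omega

/-! ### Dyson's transform of two sets -/

theorem cnt_up {g e m : ℕ} {A B : Set ℕ} :
    cnt A m + cnt (bad g e A B) (m - e) ≤ cnt (up g e A B) m := by
  classical
  have hsub : ((Finset.Icc 1 m).filter (· ∈ A)) ∪
      ((Finset.Icc 1 (m - e)).filter (· ∈ bad g e A B)).image (· + e) ⊆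
      (Finset.Icc 1 m).filter (· ∈ up g e A B) := by
    intro x
    simp only [Finset.mem_union, Finset.mem_filter, Finset.mem_Icc, Finset.mem_image]
    rintro (⟨⟨h1, h2⟩, h3⟩ | ⟨b, ⟨⟨h1, h2⟩, h3⟩, rfl⟩)
    · exact ⟨⟨h1, h2⟩, Or.inl h3⟩
    · exact ⟨⟨by omega, by omega⟩, Or.inr ⟨b, h3, rfl⟩⟩
  have hc := Finset.card_le_card hsub
  rw [Finset.card_union_of_disjoint,
    Finset.card_image_of_injective _ (add_left_injective e)] at hc
  · exact hc
  · rw [Finset.disjoint_left]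
    intro x
    simp only [Finset.mem_filter, Finset.mem_image]
    rintro ⟨-, h3⟩ ⟨b, ⟨-, h4⟩, rfl⟩
    exact h4.2.1 h3

theorem cnt_down {g e m : ℕ} {A B : Set ℕ} :
    cnt (down g e A B) m + cnt (bad g e A B) m = cnt B m :=
  cnt_diff_add (fun _ hx => hx.1) m

/-- Replacing `(A, B)` by its transform does not increase the number of elements up to `m` of
`A + T` and `B + T` together: if `x` is gained by the first sumset, then `x - e` is lost by the
second one. -/
theorem cnt_moved_add {g e m : ℕ} {A B T : Set ℕ} (he : e ∈ A) (hm : m ≤ g) :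
    cnt (up g e A B + T) m + cnt (down g e A B + T) m ≤ cnt (A + T) m + cnt (B + T) m := by
  classical
  have h1 := cnt_diff_add (A := up g e A B + T) (B := A + T)
    (Set.add_subset_add_right Set.subset_union_left) m
  have h2 := cnt_diff_add (A := B + T) (B := down g e A B + T)
    (Set.add_subset_add_right Set.sdiff_subset) m
  have key : ∀ x ≤ m, x ∈ (up g e A B + T) \ (A + T) →
      1 ≤ x - e ∧ e ≤ x ∧ x - e ∈ (B + T) \ (down g e A B + T) := by
    rintro x hx ⟨⟨a, ha, t, ht, rfl⟩, hn⟩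
    rcases ha with ha | ⟨b, hb, rfl⟩
    · exact absurd ⟨a, ha, t, ht, rfl⟩ hn
    have hb0 : b ≠ 0 := by
      rintro rfl
      exact hb.2.1 (by simpa using he)
    have hxe : b + e + t - e = b + t := by omega
    simp only [hxe]
    refine ⟨by omega, by omega, ⟨b, hb.1, t, ht, rfl⟩, ?_⟩
    rintro ⟨b', ⟨hb', hnb⟩, t', ht', hs⟩
    apply hn
    simp only at hs hx
    refine ⟨b' + e, ?_, t', ht', by simp only; omega⟩
    by_contra hc
    exact hnb ⟨hb', hc, by omega⟩
  have h3 : cnt ((up g e A B + T) \ (A + T)) m ≤ cnt ((B + T) \ (down g e A B + T)) m := by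
    unfold cnt
    apply Finset.card_le_card_of_injOn (fun x => x - e)
    · intro x hx
      simp only [Finset.coe_filter, Finset.mem_Icc, Set.mem_ofPred_eq] at hx ⊢
      obtain ⟨k1, k2, k3⟩ := key x hx.1.2 hx.2
      exact ⟨⟨k1, by omega⟩, k3⟩
    · intro x hx y hy hxy
      simp only [Finset.coe_filter, Finset.mem_Icc, Set.mem_ofPred_eq] at hx hy hxy
      have k1 := (key x hx.1.2 hx.2).2.1
      have k2 := (key y hy.1.2 hy.2).2.1
      omega
  omega

/-- Up to `g`, the transform does not enlarge the sumset `A + B + T`: if `b` is moved and `b'` is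
kept, then `(b + e) + b' = (b' + e) + b` with `b' + e ∈ A`. -/
theorem cnt_moved_both {g e m : ℕ} {A B T : Set ℕ} (hm : m ≤ g) :
    cnt (up g e A B + (down g e A B + T)) m ≤ cnt (A + (B + T)) m := by
  apply cnt_le_of
  rintro x - hx ⟨a, ha, y, ⟨b', ⟨hb', hnb⟩, t, ht, rfl⟩, rfl⟩
  simp only at hx ⊢
  rcases ha with ha | ⟨b, hb, rfl⟩
  · exact ⟨a, ha, b' + t, ⟨b', hb', t, ht, rfl⟩, rfl⟩
  · refine ⟨b' + e, ?_, b + t, ⟨b, hb.1, t, ht, rfl⟩, by simp only; omega⟩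
    by_contra hc
    exact hnb ⟨hb', hc, by omega⟩

/-! ### The density hypothesis for families of sets -/

variable {ι : Type*}

/-- `cnt_shift` summed over the sets indexed by `s`. -/
theorem sum_shift {s : Finset ι} (hs : s.Nonempty) {A : ι → Set ℕ} {b m : ℕ}
    (h0 : ∀ i ∈ s, 0 ∈ A i) (hb : 1 ≤ b) (hbm : b ≤ m)
    (h : ∀ i ∈ s, ∀ a ∈ A i, a ≤ m - b → a + b ∈ A i) :
    ∑ i ∈ s, cnt (A i) (b - 1) + 1 + ∑ i ∈ s, cnt (A i) (m - b) ≤ ∑ i ∈ s, cnt (A i) m := by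
  have h1 := Finset.sum_le_sum (fun i hi => cnt_shift (h0 i hi) hb hbm (h i hi))
  simp only [Finset.sum_add_distrib, Finset.sum_const, smul_eq_mul, mul_one] at h1
  have := hs.card_pos
  omega

/-- If adding elements of `B` to elements below `e` does not lead out of the sets `A i` (up to
`g`), then `B` may be dropped from the hypothesis for all `m < e`. -/
theorem growth {s : Finset ι} (hs : s.Nonempty) {A : ι → Set ℕ} {B : Set ℕ} {g e : ℕ} {γ : ℝ}
    (hγ : γ ≤ 1) (h0 : ∀ i ∈ s, 0 ∈ A i)
    (H : ∀ m ≤ g, γ * m ≤ ((cnt B m + ∑ i ∈ s, cnt (A i) m : ℕ) : ℝ))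
    (hc : ∀ i ∈ s, ∀ a ∈ A i, a < e → ∀ b ∈ B, b + a ≤ g → b + a ∈ A i) :
    ∀ m ≤ g, m < e → γ * m ≤ ((∑ i ∈ s, cnt (A i) m : ℕ) : ℝ) := by
  classical
  intro m
  induction m using Nat.strong_induction_on with
  | _ m ih =>
  intro hmg hme
  by_cases hex : ∃ b, b ∈ B ∧ 1 ≤ b ∧ b ≤ m
  · obtain ⟨hbB, hb1, hbm⟩ := Nat.find_spec hex
    have hmin := fun k => Nat.find_min hex (m := k)
    generalize Nat.find hex = b at *
    have hz : cnt B (b - 1) = 0 := by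
      rw [cnt_eq_of_no_mem (Nat.zero_le _), cnt_zero]
      intro x hx1 hx2 hxB
      exact hmin x (by omega) ⟨hxB, by omega, by omega⟩
    have h1 := H (b - 1) (by omega)
    rw [hz, zero_add] at h1
    have h2 := ih (m - b) (by omega) (by omega) (by omega)
    have h3 := sum_shift hs h0 hb1 hbm
      (fun i hi a ha ham => by
        rw [add_comm]
        exact hc i hi a ha (by omega) b hbB (by omega))
    have h4 : ((∑ i ∈ s, cnt (A i) (b - 1) + 1 + ∑ i ∈ s, cnt (A i) (m - b) : ℕ) : ℝ) ≤
        ((∑ i ∈ s, cnt (A i) m : ℕ) : ℝ) := by exact_mod_cast h3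
    rw [Nat.cast_add, Nat.cast_add, Nat.cast_one] at h4
    rw [Nat.cast_sub hb1] at h1
    rw [Nat.cast_sub hbm] at h2
    push_cast at h1 h2 h4 ⊢
    linarith
  · have hz : cnt B m = 0 := by
      rw [cnt_eq_of_no_mem (Nat.zero_le _), cnt_zero]
      intro x hx1 hx2 hxB
      exact hex ⟨x, hxB, by omega, by omega⟩
    simpa [hz] using H m hmg

/-- The transform with the least admissible `e` preserves the hypothesis: `B` loses at `m` only
the elements of `bad g e (A i) B` in `(m - e, m]`, and if `b` is the least of these, the elements
of the sets `A k` in `[b, m]`, for `k ∈ s`, make up for the loss. -/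
theorem moved_hyp {s : Finset ι} {A A' : ι → Set ℕ} {B : Set ℕ} {g e : ℕ}
    {γ : ℝ} (hγ : γ ≤ 1) (h0 : ∀ i ∈ s, 0 ∈ A i)
    (H : ∀ m ≤ g, γ * m ≤ ((cnt B m + ∑ i ∈ s, cnt (A i) m : ℕ) : ℝ))
    (hc : ∀ i ∈ s, ∀ a ∈ A i, a < e → ∀ b ∈ B, b + a ≤ g → b + a ∈ A i)
    {i : ι} (hi : i ∈ s)
    (hA'i : A' i = up g e (A i) B) (hA' : ∀ k, k ∈ s → k ≠ i → A' k = A k) :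
    ∀ m ≤ g, γ * m ≤ ((cnt (down g e (A i) B) m + ∑ i ∈ s, cnt (A' i) m : ℕ) : ℝ) := by
  classical
  intro m hm
  have hsum : ∑ k ∈ s, cnt (A k) m + cnt (bad g e (A i) B) (m - e) ≤
      ∑ k ∈ s, cnt (A' k) m := by
    rw [← Finset.add_sum_erase s (fun k => cnt (A k) m) hi,
      ← Finset.add_sum_erase s (fun k => cnt (A' k) m) hi, hA'i]
    have h1 := cnt_up (g := g) (e := e) (m := m) (A := A i) (B := B)
    have h2 : ∑ k ∈ s.erase i, cnt (A' k) m = ∑ k ∈ s.erase i, cnt (A k) m :=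
      Finset.sum_congr rfl fun k hk => by
        rw [hA' k (Finset.mem_of_mem_erase hk) (Finset.ne_of_mem_erase hk)]
    omega
  have hdown := cnt_down (g := g) (e := e) (m := m) (A := A i) (B := B)
  by_cases hex : ∃ b, b ∈ bad g e (A i) B ∧ m - e < b ∧ b ≤ m
  · obtain ⟨hbB, hb1, hbm⟩ := Nat.find_spec hex
    have hmin := fun k => Nat.find_min hex (m := k)
    generalize Nat.find hex = b at *
    have hz : cnt (bad g e (A i) B) (b - 1) = cnt (bad g e (A i) B) (m - e) := by
      apply cnt_eq_of_no_mem (by omega)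
      intro x hx1 hx2 hxB
      exact hmin x (by omega) ⟨hxB, by omega, by omega⟩
    have hint := cnt_interval (A := B) (B := bad g e (A i) B) (fun _ hx => hx.1)
      (k := b - 1) (m := m) (by omega)
    have h1 := H (b - 1) (by omega)
    have h2 := growth ⟨i, hi⟩ hγ h0 H hc (m - b) (by omega) (by omega)
    have h3 := sum_shift ⟨i, hi⟩ h0 (b := b) (m := m) (by omega) hbm
      (fun i hi a ha ham => by
        rw [add_comm]
        exact hc i hi a ha (by omega) b hbB.1 (by omega))
    have h4 : cnt B (b - 1) + ∑ i ∈ s, cnt (A i) (b - 1) + 1 + ∑ i ∈ s, cnt (A i) (m - b) ≤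
        cnt (down g e (A i) B) m + ∑ i ∈ s, cnt (A' i) m := by omega
    have h5 := (Nat.cast_le (α := ℝ)).2 h4
    rw [Nat.cast_sub (by omega)] at h1
    rw [Nat.cast_sub hbm] at h2
    push_cast at h1 h2 h5 ⊢
    linarith
  · have hz : cnt (bad g e (A i) B) m = cnt (bad g e (A i) B) (m - e) := by
      apply cnt_eq_of_no_mem (by omega)
      intro x hx1 hx2 hxB
      exact hex ⟨x, hxB, by omega, by omega⟩
    refine (H m hm).trans ?_
    rw [Nat.cast_le]
    omega

/-! ### Sums of rank `r` -/

theorem sum_powersetCard_insert [DecidableEq ι] {s : Finset ι} {x : ι} (hx : x ∉ s) (r : ℕ)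
    (f : Finset ι → ℕ) :
    ∑ I ∈ Finset.powersetCard (r + 1) (insert x s), f I =
      ∑ I ∈ Finset.powersetCard (r + 1) s, f I +
        ∑ I ∈ Finset.powersetCard r s, f (insert x I) := by
  rw [Finset.powersetCard_succ_insert hx, Finset.sum_union, Finset.sum_image]
  · intro I hI J hJ hIJ
    have h1 : x ∉ I := fun h => hx ((Finset.mem_powersetCard.1 hI).1 h)
    have h2 : x ∉ J := fun h => hx ((Finset.mem_powersetCard.1 hJ).1 h)
    rw [← Finset.erase_insert h1, ← Finset.erase_insert h2, hIJ]
  · rw [Finset.disjoint_left]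
    intro I hI hJ
    obtain ⟨J, -, rfl⟩ := Finset.mem_image.1 hJ
    exact hx ((Finset.mem_powersetCard.1 hI).1 (Finset.mem_insert_self x J))

/-- The rank `r` counting function of the sets `A i`, `i ∈ s`, in terms of pointwise sums; it is
the intended notion if all the sets contain `0`. -/
noncomputable def Phi (s : Finset ι) (A : ι → Set ℕ) (r m : ℕ) : ℕ :=
  ∑ I ∈ Finset.powersetCard r s, cnt (∑ i ∈ I, A i) m

theorem Phi_one (s : Finset ι) (A : ι → Set ℕ) (m : ℕ) :
    Phi s A 1 m = ∑ i ∈ s, cnt (A i) m := by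
  simp [Phi, Finset.powersetCard_one]

/-- Adding one more set containing `0`. -/
theorem Phi_insert_ge [DecidableEq ι] {s : Finset ι} {j : ι} (hj : j ∉ s) {A : ι → Set ℕ}
    (h0 : 0 ∈ A j) (r m : ℕ) :
    Phi s A (r + 1) m + Phi s A r m ≤ Phi (insert j s) A (r + 1) m := by
  unfold Phi
  rw [sum_powersetCard_insert hj]
  gcongr with I hI
  have h1 : j ∉ I := fun h => hj ((Finset.mem_powersetCard.1 hI).1 h)
  rw [Finset.sum_insert h1]
  exact cnt_le_of fun x _ _ hx => ⟨0, h0, x, hx, by simp⟩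

/-- The transform does not increase the counts of rank at least `2`. -/
theorem Phi_moved_le [DecidableEq ι] {s : Finset ι} {i j : ι} (hj : j ∉ s) (hi : i ∈ s)
    {A A' : ι → Set ℕ} {g e : ℕ} (he : e ∈ A i) (hA'i : A' i = up g e (A i) (A j))
    (hA'j : A' j = down g e (A i) (A j)) (hA' : ∀ k, k ≠ i → k ≠ j → A' k = A k)
    (r : ℕ) {m : ℕ} (hm : m ≤ g) :
    Phi (insert j s) A' (r + 2) m ≤ Phi (insert j s) A (r + 2) m := by
  obtain ⟨u, hiu, rfl⟩ : ∃ u, i ∉ u ∧ insert i u = s :=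
    ⟨s.erase i, Finset.notMem_erase _ _, Finset.insert_erase hi⟩
  have hju : j ∉ u := fun h => hj (Finset.mem_insert_of_mem h)
  have hij : i ≠ j := fun h => hj (h ▸ hi)
  have hS : ∀ I ⊆ u, ∑ k ∈ I, A' k = ∑ k ∈ I, A k := fun I hI =>
    Finset.sum_congr rfl fun k hk => hA' k (fun h => hiu (h ▸ hI hk)) (fun h => hju (h ▸ hI hk))
  have hni : ∀ I ⊆ u, i ∉ I := fun I hI h => hiu (hI h)
  have hnj : ∀ I ⊆ u, j ∉ I := fun I hI h => hju (hI h)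
  unfold Phi
  -- The subsets are split according to which of `i` and `j` they contain.
  rw [sum_powersetCard_insert hj, sum_powersetCard_insert hiu, sum_powersetCard_insert hiu,
    sum_powersetCard_insert hj, sum_powersetCard_insert hiu, sum_powersetCard_insert hiu]
  have h1 : ∑ I ∈ Finset.powersetCard (r + 1 + 1) u, cnt (∑ k ∈ I, A' k) m =
      ∑ I ∈ Finset.powersetCard (r + 1 + 1) u, cnt (∑ k ∈ I, A k) m :=
    Finset.sum_congr rfl fun I hI => by rw [hS I (Finset.mem_powersetCard.1 hI).1]
  have h2 : ∑ I ∈ Finset.powersetCard (r + 1) u, cnt (∑ k ∈ insert i I, A' k) m +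
        ∑ I ∈ Finset.powersetCard (r + 1) u, cnt (∑ k ∈ insert j I, A' k) m ≤
      ∑ I ∈ Finset.powersetCard (r + 1) u, cnt (∑ k ∈ insert i I, A k) m +
        ∑ I ∈ Finset.powersetCard (r + 1) u, cnt (∑ k ∈ insert j I, A k) m := by
    rw [← Finset.sum_add_distrib, ← Finset.sum_add_distrib]
    apply Finset.sum_le_sum
    intro I hI
    have hIu := (Finset.mem_powersetCard.1 hI).1
    rw [Finset.sum_insert (hni I hIu), Finset.sum_insert (hnj I hIu),
      Finset.sum_insert (hni I hIu), Finset.sum_insert (hnj I hIu), hS I hIu, hA'i, hA'j]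
    exact cnt_moved_add he hm
  have h3 : ∑ I ∈ Finset.powersetCard r u, cnt (∑ k ∈ insert j (insert i I), A' k) m ≤
      ∑ I ∈ Finset.powersetCard r u, cnt (∑ k ∈ insert j (insert i I), A k) m := by
    apply Finset.sum_le_sum
    intro I hI
    have hIu := (Finset.mem_powersetCard.1 hI).1
    have hnj' : j ∉ insert i I := by
      simp only [Finset.mem_insert, not_or]
      exact ⟨hij.symm, hnj I hIu⟩
    rw [Finset.sum_insert hnj', Finset.sum_insert hnj', Finset.sum_insert (hni I hIu),
      Finset.sum_insert (hni I hIu), hS I hIu, hA'i, hA'j, add_left_comm, add_left_comm (A j)]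
    exact cnt_moved_both hm
  omega

/-! ### The induction -/

/-- Dyson's theorem for sets containing `0`, in rank `r + 1`. The inner induction is on the number
of elements of `A j` in `[1, g]`. -/
theorem Phi_ge [DecidableEq ι] {g : ℕ} {γ : ℝ} (hγ : γ ≤ 1) (s : Finset ι) :
    ∀ A : ι → Set ℕ, (∀ i ∈ s, 0 ∈ A i) →
      (∀ m ≤ g, γ * m ≤ ((∑ i ∈ s, cnt (A i) m : ℕ) : ℝ)) →
      ∀ r m : ℕ, m ≤ g →
        ((s.card - 1).choose r : ℝ) * (γ * m) ≤ (Phi s A (r + 1) m : ℝ) := by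
  induction s using Finset.induction_on with
  | empty =>
    intro A _ H r m hm
    have h := H m hm
    simp only [Finset.sum_empty, Nat.cast_zero] at h
    exact (mul_nonpos_of_nonneg_of_nonpos (Nat.cast_nonneg _) h).trans (Nat.cast_nonneg _)
  | insert j s hj ih =>
    intro A
    induction hN : cnt (A j) g using Nat.strong_induction_on generalizing A with
    | _ N ihN =>
    intro h0 H r m hm
    rcases r with _ | r
    · rw [zero_add, Phi_one]
      simpa using H m hm
    rw [Finset.card_insert_of_notMem hj, Nat.add_sub_cancel]
    rcases s.eq_empty_or_nonempty with rfl | hs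
    · simp
    have h0s : ∀ i ∈ s, 0 ∈ A i := fun i hi => h0 i (Finset.mem_insert_of_mem hi)
    have h0j : 0 ∈ A j := h0 j (Finset.mem_insert_self _ _)
    have H' : ∀ m ≤ g, γ * m ≤ ((cnt (A j) m + ∑ i ∈ s, cnt (A i) m : ℕ) : ℝ) := by
      intro m hm
      rw [← Finset.sum_insert (f := fun k => cnt (A k) m) hj]
      exact H m hm
    classical
    by_cases hex : ∃ e, ∃ i ∈ s, e ∈ A i ∧ ∃ b, b ∈ bad g e (A i) (A j)
    · obtain ⟨i, hi, hei, b, hb⟩ := Nat.find_spec hex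
      have hmin := fun k => Nat.find_min hex (m := k)
      generalize Nat.find hex = e at *
      have hc : ∀ i ∈ s, ∀ a ∈ A i, a < e → ∀ b ∈ A j, b + a ≤ g → b + a ∈ A i := by
        intro k hk a ha hae b hb hba
        by_contra hn
        exact hmin a hae ⟨k, hk, ha, b, hb, hn, hba⟩
      have hij : i ≠ j := fun h => hj (h ▸ hi)
      obtain ⟨A', hA'i, hA'j, hA'⟩ : ∃ A' : ι → Set ℕ, A' i = up g e (A i) (A j) ∧
          A' j = down g e (A i) (A j) ∧ ∀ k, k ≠ i → k ≠ j → A' k = A k := by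
        refine ⟨fun k => if k = i then up g e (A i) (A j) else
          if k = j then down g e (A i) (A j) else A k, ?_, ?_, ?_⟩
        · simp
        · simp [hij.symm]
        · intro k h1 h2
          simp [h1, h2]
      have hlt : cnt (A' j) g < N := by
        have h1 := cnt_down (g := g) (e := e) (m := g) (A := A i) (B := A j)
        have h2 : 0 < cnt (bad g e (A i) (A j)) g := by
          unfold cnt
          rw [Finset.card_pos]
          refine ⟨b, ?_⟩
          -- `b = 0` is excluded because `e ∈ A i`.
          have hb0 : b ≠ 0 := by
            rintro rfl
            exact hb.2.1 (by simpa using hei)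
          have := hb.2.2
          simp only [Finset.mem_filter, Finset.mem_Icc]
          exact ⟨⟨by omega, by omega⟩, hb⟩
        rw [hA'j]
        omega
      have h0' : ∀ k ∈ insert j s, 0 ∈ A' k := by
        intro k hk
        by_cases hki : k = i
        · rw [hki, hA'i]
          exact Or.inl (h0s i hi)
        by_cases hkj : k = j
        · rw [hkj, hA'j]
          exact ⟨h0j, fun h => h.2.1 (by simpa using hei)⟩
        · rw [hA' k hki hkj]
          exact h0 k hk
      have Hn : ∀ m ≤ g, γ * m ≤ ((∑ i ∈ insert j s, cnt (A' i) m : ℕ) : ℝ) := by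
        intro m hm
        rw [Finset.sum_insert hj, hA'j]
        exact moved_hyp hγ h0s H' hc hi hA'i
          (fun k hk hki => hA' k hki (fun h => hj (h ▸ hk))) m hm
      have h1 := ihN _ hlt A' rfl h0' Hn (r + 1) m hm
      rw [Finset.card_insert_of_notMem hj, Nat.add_sub_cancel] at h1
      refine h1.trans ?_
      rw [Nat.cast_le]
      exact Phi_moved_le hj hi hei hA'i hA'j hA' r hm
    · have Hs : ∀ m ≤ g, γ * m ≤ ((∑ i ∈ s, cnt (A i) m : ℕ) : ℝ) := by
        intro m hm
        refine growth (e := g + 1) hs hγ h0s H' ?_ m hm (by omega)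
        intro k hk a ha _ b hb hba
        by_contra hn
        exact hex ⟨a, k, hk, ha, b, hb, hn, hba⟩
      have h1 := ih A h0s Hs r m hm
      have h2 := ih A h0s Hs (r + 1) m hm
      have h3 := (Nat.cast_le (α := ℝ)).2 (Phi_insert_ge hj h0j (r + 1) m)
      obtain ⟨c, hc⟩ : ∃ c, s.card = c + 1 := ⟨s.card - 1, by have := hs.card_pos; omega⟩
      rw [hc, Nat.add_sub_cancel] at h1 h2
      rw [hc, Nat.choose_succ_succ']
      push_cast at h3 ⊢
      linarith

theorem phi_eq_Phi {n : ℕ} (A : Fin n → Set ℕ) (r m : ℕ) :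
    phi A r m = Phi Finset.univ (fun i => A i ∪ {0}) r m := by
  unfold phi Phi
  refine Finset.sum_congr rfl fun I _ => ?_
  rw [count_eq_cnt]
  congr 1
  ext x
  rw [Set.mem_finsetSum]
  constructor
  · rintro ⟨f, hf, rfl⟩
    exact ⟨f, fun {i} hi => hf i hi, rfl⟩
  · rintro ⟨f, hf, rfl⟩
    exact ⟨f, fun i hi => hf hi, rfl⟩

end Dyson

/-- Dyson's theorem: if `φ₁(m) ≥ γ·m` for all `m = 1, …, g`, then
`φ_r(m) ≥ C(n-1, r-1)·min(1, γ)·m` for all `m = 1, …, g` and `r = 1, …, n`. -/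
theorem dyson_theorem (n : ℕ) (hn : 0 < n) (A : Fin n → Set ℕ)
    (hA : ∀ i, ∀ a ∈ A i, 0 < a) (g : ℕ) (hg : 0 < g) (γ : ℝ)
    (h1 : ∀ m : ℕ, 1 ≤ m → m ≤ g → γ * m ≤ (phi A 1 m : ℝ)) :
    ∀ r m : ℕ, 1 ≤ r → r ≤ n → 1 ≤ m → m ≤ g →
      ((n - 1).choose (r - 1) : ℝ) * min 1 γ * m ≤ (phi A r m : ℝ) := by
  intro r m hr _ _ hmg
  have key := Dyson.Phi_ge (g := g) (γ := min 1 γ) (min_le_left _ _) Finset.univ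
    (fun i => A i ∪ {0}) (fun i _ => Or.inr rfl) ?_ (r - 1) m hmg
  · rw [Finset.card_univ, Fintype.card_fin, Nat.sub_add_cancel hr, ← Dyson.phi_eq_Phi] at key
    rw [mul_assoc]
    exact key
  · intro k hk
    rw [← Dyson.Phi_one, ← Dyson.phi_eq_Phi]
    rcases Nat.eq_zero_or_pos k with rfl | hk0
    · simp
    · exact (mul_le_mul_of_nonneg_right (min_le_right _ _) (Nat.cast_nonneg _)).trans
        (h1 k hk0 hk)
end

section
/- Let G be an additive abelian group, let A and B be finite nonempty subsets of G, and let H = H(A + B) = {g ∈ G : (A + B) + g = A + B} be the stabilizer of the sumset A + B. If |A + B| < |A| + |B|, then |A + B| = |A + H| + |B + H| − |H|. -/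
/-!
The heart of the matter is Kneser's inequality `|A + K| + |B + K| ≤ |A + B| + |K|` with
`K = stab (A + B)`, valid for all finite nonempty `A, B`. All four numbers are multiples of `|K|`;
so if the inequality were strict then `|A + B| ≥ |A + K| + |B + K| ≥ |A| + |B|`, which the
hypothesis of the theorem excludes.

The inequality is proved by DeVos's argument, in a form that replaces the passage to `G / K` by
working with *saturated* pairs, i.e. with `A + K = A` and `B + K = B`. The induction is on
`|A + B|`, and for saturated pairs with a given `|A + B|`, on `|A|`.

Unless `A` is a coset of `K`, some translate of `B` makes `A ∩ B` nonempty and smaller than `A`.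
Call `C ⊆ A + B` *convergent* if it is nonempty, `K`-periodic and
`|A ∩ B| + |(A ∪ B) + stab C| ≤ |C| + |stab C|`. By induction `(A ∩ B) + (A ∪ B)` is convergent
(`saturated`). Take a convergent `C` with `H = stab C` as small as possible. If `H = K`, the claim
follows from `|A ∩ B| + |A ∪ B| = |A| + |B|`. Otherwise some coset `a + b + H` with `a ∈ A`,
`b ∈ B` is not contained in `A + B`. Let `A₁, A₂` be the parts of `A` in `a + H`, `b + H`, and
`B₁, B₂` the parts of `B` in `b + H`, `a + H`. Then `C ∪ (Aᵢ + Bᵢ)` has the smaller stabilizer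
`Hᵢ = stab (Aᵢ + Bᵢ)` (`stab_union`), so it is not convergent; together with Kneser's inequality
for `Aᵢ, Bᵢ` this gives
`|(A ∪ B) + H| - |(A ∪ B) + Hᵢ| < |H| - |Aᵢ + Hᵢ| - |Bᵢ + Hᵢ|` (`local_step`).
For `i = 1` this is incompatible with `a + H = b + H`, with `A₂ = ∅` and with `B₂ = ∅`
(`coset_count`). In the remaining case, the failure of the claim for `A, B` bounds the number of
elements of `(a + H) ∪ (b + H)` outside `A ∪ B`, and yields both `|H₁| < |H₂|` and `|H₂| < |H₁|`
(`core`).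
-/

open Pointwise

namespace KneserAux

variable {G : Type*} [AddCommGroup G]

/-- The stabilizer `{g | g + X = X}` of a set `X`, as a subgroup. -/
abbrev stab (X : Set G) : AddSubgroup G := AddAction.stabilizer G X

/-- `X` is a union of cosets of `K`. -/
def Per (X : Set G) (K : AddSubgroup G) : Prop := ∀ x ∈ X, ∀ k ∈ K, k + x ∈ X

/-- The coset of `H` containing `a`. -/
def cos (a : G) (H : AddSubgroup G) : Set G := {x | x - a ∈ H}

/-- The inequality of Kneser's theorem for the pair `A, B`. -/
def Kn (A B : Set G) : Prop :=
  (A + (stab (A + B) : Set G)).ncard + (B + (stab (A + B) : Set G)).ncard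
    ≤ (A + B).ncard + (stab (A + B) : Set G).ncard

/-! ### Periodic sets, stabilizers and cosets -/

lemma mem_stab {X : Set G} {g : G} : g ∈ stab X ↔ ∀ b, g + b ∈ X ↔ b ∈ X :=
  AddAction.mem_stabilizer_set

lemma mem_stab_of_finite {X : Set G} (hX : X.Finite) {g : G} (h : ∀ x ∈ X, g + x ∈ X) :
    g ∈ stab X := by
  rw [AddAction.mem_stabilizer_set_iff_vadd_set_subset hX]
  rintro _ ⟨x, hx, rfl⟩
  exact h x hx

lemma per_stab (X : Set G) : Per X (stab X) := fun x hx _ hk => (mem_stab.1 hk x).2 hx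

lemma Per.le_stab {X : Set G} {K : AddSubgroup G} (h : Per X K) : K ≤ stab X := by
  intro k hk
  refine mem_stab.2 fun b => ⟨fun hb => ?_, fun hb => h b hb k hk⟩
  simpa using h _ hb (-k) (K.neg_mem hk)

lemma Per.mono {X : Set G} {K L : AddSubgroup G} (h : Per X L) (hKL : K ≤ L) : Per X K :=
  fun x hx k hk => h x hx k (hKL hk)

lemma Per.add_eq {X : Set G} {K : AddSubgroup G} (h : Per X K) : X + (K : Set G) = X := by
  ext y
  constructor
  · rintro ⟨x, hx, k, hk, rfl⟩
    simpa [add_comm] using h x hx k hk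
  · exact fun hy => ⟨y, hy, 0, K.zero_mem, add_zero y⟩

lemma per_add (X : Set G) (K : AddSubgroup G) : Per (X + (K : Set G)) K := by
  rintro _ ⟨x, hx, k, hk, rfl⟩ l hl
  exact ⟨x, hx, l + k, K.add_mem hl hk, by simp only; abel⟩

lemma Per.add_right {A : Set G} {K : AddSubgroup G} (h : Per A K) (B : Set G) :
    Per (A + B) K := by
  rintro _ ⟨a, ha, b, hb, rfl⟩ k hk
  exact ⟨k + a, h a ha k hk, b, hb, by simp only; abel⟩

lemma Per.inter {A B : Set G} {K : AddSubgroup G} (hA : Per A K) (hB : Per B K) :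
    Per (A ∩ B) K := fun x hx k hk => ⟨hA x hx.1 k hk, hB x hx.2 k hk⟩

lemma Per.union {A B : Set G} {K : AddSubgroup G} (hA : Per A K) (hB : Per B K) :
    Per (A ∪ B) K := fun x hx k hk => hx.imp (hA x · k hk) (hB x · k hk)

lemma per_cos (a : G) (H : AddSubgroup G) : Per (cos a H) H := by
  intro x hx k hk
  have := H.add_mem hk hx
  rwa [← add_sub_assoc] at this

lemma subset_add (X : Set G) (K : AddSubgroup G) : X ⊆ X + (K : Set G) :=
  fun x hx => ⟨x, hx, 0, K.zero_mem, add_zero x⟩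

lemma stab_finite {X : Set G} (h0 : X.Nonempty) (hX : X.Finite) : (stab X : Set G).Finite :=
  AddAction.stabilizer_finite h0 hX

lemma ncard_pos_sub {K : AddSubgroup G} (hK : (K : Set G).Finite) : 0 < (K : Set G).ncard :=
  (Set.ncard_pos hK).2 ⟨0, K.zero_mem⟩

lemma self_mem_cos (a : G) (H : AddSubgroup G) : a ∈ cos a H := by
  simp [cos]

lemma cos_eq (a : G) (H : AddSubgroup G) : cos a H = (fun h => h + a) '' (H : Set G) := by
  ext x
  constructor
  · exact fun hx => ⟨x - a, hx, by simp⟩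
  · rintro ⟨h, hh, rfl⟩
    simpa [cos] using hh

lemma cos_ncard (a : G) (H : AddSubgroup G) : (cos a H).ncard = (H : Set G).ncard := by
  rw [cos_eq, Set.ncard_image_of_injective _ (add_left_injective a)]

lemma cos_finite (a : G) {H : AddSubgroup G} (hH : (H : Set G).Finite) : (cos a H).Finite := by
  rw [cos_eq]; exact hH.image _

lemma dvd_ncard_add (X : Set G) (H : AddSubgroup G) :
    (H : Set G).ncard ∣ (X + (H : Set G)).ncard := by
  have := Nat.card_congr
    (QuotientAddGroup.preimageMkEquivAddSubgroupProdSet H ((QuotientAddGroup.mk : G → G ⧸ H) '' X))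
  rw [Nat.card_prod, QuotientAddGroup.preimage_image_mk_eq_add] at this
  exact Dvd.intro _ this.symm

lemma dvd_ncard_of_le {K H : AddSubgroup G} (h : K ≤ H) :
    (K : Set G).ncard ∣ (H : Set G).ncard := AddSubgroup.card_dvd_of_le h

lemma ncard_lt_of_lt {K H : AddSubgroup G} (hH : (H : Set G).Finite) (h : K < H) :
    (K : Set G).ncard < (H : Set G).ncard :=
  Set.ncard_lt_ncard (SetLike.coe_ssubset_coe.2 h) hH

lemma ncard_add_sub_le {A B : Set G} (hA : A.Finite) (hB : B.Finite) (hb : B.Nonempty) :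
    A.ncard ≤ (A + B).ncard := by
  obtain ⟨b, hb⟩ := hb
  rw [← Set.ncard_image_of_injective A (add_left_injective b)]
  refine Set.ncard_le_ncard ?_ (hA.add hB)
  rintro _ ⟨a, ha, rfl⟩
  exact ⟨a, ha, b, hb, rfl⟩

/-! ### Convergent sets -/

/-- A proper nonempty part `E` of a coset of `H`, joined to an `H`-periodic set `C` missing that
coset: the stabilizer drops to that of `E`, because the coset containing `E` is the only one that
the union meets without containing it. -/
lemma stab_union {C E : Set G} {H : AddSubgroup G} {z : G} (hC : Per C H)
    (hEf : E.Finite)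
    (hE0 : E.Nonempty) (hED : E ⊆ cos z H) (hne : E ≠ cos z H) (hdisj : Disjoint C (cos z H)) :
    stab E < H ∧ stab (C ∪ E) = stab E := by
  obtain ⟨x, hx⟩ := hE0
  obtain ⟨y, hyD, hyE⟩ : ∃ y ∈ cos z H, y ∉ E := by
    by_contra! h
    exact hne (hED.antisymm h)
  have hle : stab E ≤ H := by
    intro g hg
    have h1 := H.sub_mem (hED (per_stab E x hx g hg)) (hED hx)
    have h2 : g + x - z - (x - z) = g := by abel
    rwa [h2] at h1
  have hyx : y - x ∈ H := by
    have h1 := H.sub_mem hyD (hED hx)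
    have h2 : y - z - (x - z) = y - x := by abel
    rwa [h2] at h1
  have hDC : ∀ w ∈ cos z H, w ∉ C := fun w hw hwC => Set.disjoint_left.1 hdisj hwC hw
  refine ⟨lt_of_le_of_ne hle fun h => hyE ?_, le_antisymm ?_ ?_⟩
  · have := per_stab E x hx (y - x) (h ▸ hyx)
    simpa using this
  · intro g hg
    have hgH : g ∈ H := by
      rcases (mem_stab.1 hg x).2 (Or.inr hx) with hgx | hgx
      · have h1 := hC _ hgx _ hyx
        have h2 : y - x + (g + x) = g + y := by abel
        rw [h2] at h1
        rcases (mem_stab.1 hg y).1 (Or.inl h1) with h3 | h3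
        · exact (hDC y hyD h3).elim
        · exact (hyE h3).elim
      · have h1 := H.sub_mem (hED hgx) (hED hx)
        have h2 : g + x - z - (x - z) = g := by abel
        rwa [h2] at h1
    refine mem_stab_of_finite hEf fun e he => ?_
    rcases (mem_stab.1 hg e).2 (Or.inr he) with h3 | h3
    · exact (hDC _ (per_cos z H e (hED he) g hgH) h3).elim
    · exact h3
  · exact ((hC.mono hle).union (per_stab E)).le_stab

/-- `C` is convergent for `A, B`: a nonempty subset of `A + B`, periodic under `stab (A + B)`, that
is as large as Kneser's inequality would make the sum of `A ∩ B` and `A ∪ B`, with `A ∩ B` itself in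
place of its saturation. -/
def Conv (A B : Set G) (C : Set G) : Prop :=
  C ⊆ A + B ∧ C.Nonempty ∧ stab (A + B) ≤ stab C ∧
    (A ∩ B).ncard + ((A ∪ B) + (stab C : Set G)).ncard ≤ C.ncard + (stab C : Set G).ncard

/-- Adjoining to a minimal convergent `C` the sum `A' + B'` of parts of `A, B` lying in an
incomplete coset of `H = stab C` does not give a convergent set; combined with Kneser's inequality for
`A', B'` this bounds `(A ∪ B) + H` by `(A ∪ B) + stab (A' + B')`. -/
lemma local_step {A B C A' B' : Set G} (hA : A.Finite) (hB : B.Finite)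
    (hC : Conv A B C)
    (hmin : ∀ C', Conv A B C' → (stab C : Set G).ncard ≤ (stab C' : Set G).ncard)
    (hA0 : A'.Nonempty) (hB0 : B'.Nonempty) (hAA : A' ⊆ A) (hBB : B' ⊆ B)
    (hper : Per A' (stab (A + B)))
    (IH : ∀ A' B' : Set G, A'.Finite → B'.Finite → A'.Nonempty → B'.Nonempty →
      (A' + B').ncard < (A + B).ncard → Kn A' B')
    {z : G} (hz : A' + B' ⊆ cos z (stab C)) (hdisj : Disjoint C (cos z (stab C)))
    (hzn : ¬ cos z (stab C) ⊆ A + B) :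
    ∃ H' : AddSubgroup G, H' ≤ stab C ∧
      ((A ∪ B) + (stab C : Set G)).ncard + (A' + (H' : Set G)).ncard + (B' + (H' : Set G)).ncard
        < (stab C : Set G).ncard + ((A ∪ B) + (H' : Set G)).ncard ∧
      (A' + (H' : Set G)).ncard + (B' + (H' : Set G)).ncard
        ≤ (A' + B').ncard + (H' : Set G).ncard ∧
      (A' + (H' : Set G)).ncard + (B' + (H' : Set G)).ncard + (H' : Set G).ncard
        ≤ (stab C : Set G).ncard ∧
      C.ncard + (A' + B').ncard ≤ (A + B).ncard := by
  obtain ⟨hCs, hC0, hCK, hCc⟩ := hC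
  have hABf : (A + B).Finite := hA.add hB
  have hCf : C.Finite := hABf.subset hCs
  have hHf := stab_finite hC0 hCf
  have hEs : A' + B' ⊆ A + B := Set.add_subset_add hAA hBB
  have hEf : (A' + B').Finite := hABf.subset hEs
  have hE0 : (A' + B').Nonempty := hA0.add hB0
  have hCE : Disjoint C (A' + B') := hdisj.mono_right hz
  obtain ⟨hlt, heq⟩ := stab_union (per_stab C) hEf hE0 hz (fun h => hzn (h ▸ hEs)) hdisj
  have hU : (C ∪ (A' + B')).ncard = C.ncard + (A' + B').ncard := Set.ncard_union_eq hCE hCf hEf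
  have hUle : C.ncard + (A' + B').ncard ≤ (A + B).ncard := by
    rw [← hU]; exact Set.ncard_le_ncard (Set.union_subset hCs hEs) hABf
  have hCpos : 0 < C.ncard := (Set.ncard_pos hCf).2 hC0
  have hk' : Kn A' B' := IH A' B' (hA.subset hAA) (hB.subset hBB) hA0 hB0 (by omega)
  have hcard := ncard_lt_of_lt hHf hlt
  have hnot : ¬ Conv A B (C ∪ (A' + B')) := fun h => by
    have := hmin _ h
    rw [heq] at this
    omega
  have hnot' : C.ncard + (A' + B').ncard + (stab (A' + B') : Set G).ncard
      < (A ∩ B).ncard + ((A ∪ B) + (stab (A' + B') : Set G)).ncard := by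
    by_contra! h
    refine hnot ⟨Set.union_subset hCs hEs, hC0.mono Set.subset_union_left, ?_, ?_⟩
    · rw [heq]; exact (hper.add_right B').le_stab
    · rw [heq, hU]; exact h
  unfold Kn at hk'
  have hmono : ((A ∪ B) + (stab (A' + B') : Set G)).ncard ≤ ((A ∪ B) + (stab C : Set G)).ncard :=
    Set.ncard_le_ncard (Set.add_subset_add_left hlt.le) ((hA.union hB).add hHf)
  refine ⟨stab (A' + B'), hlt.le, by omega, hk', ?_, hUle⟩
  -- both sides are multiples of `|H'|`, so the strict inequality has a gap of at least `|H'|`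
  have h1 : (A' + (stab (A' + B') : Set G)).ncard + (B' + (stab (A' + B') : Set G)).ncard
      < (stab C : Set G).ncard := by omega
  obtain ⟨p, hp⟩ := dvd_ncard_add A' (stab (A' + B'))
  obtain ⟨q, hq⟩ := dvd_ncard_add B' (stab (A' + B'))
  obtain ⟨r, hr⟩ := dvd_ncard_of_le hlt.le
  rw [hp, hq, hr, ← mul_add] at h1 ⊢
  have := Nat.lt_of_mul_lt_mul_left h1
  calc _ = (stab (A' + B') : Set G).ncard * (p + q + 1) := by ring
    _ ≤ _ := Nat.mul_le_mul_left _ this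

/-- For `H' ≤ H`, the coset `c + H` meets `M + H'` exactly in `(M ∩ (c + H)) + H'`, so a cover of
`M ∩ (c + H)` bounds from below what `M + H` has beyond `M + H'`. -/
lemma coset_count {M X Y : Set G} {H H' : AddSubgroup G} (hM : M.Finite) (hX : X.Finite)
    (hY : Y.Finite)
    (hH : (H : Set G).Finite) (hle : H' ≤ H) {c : G} (hc : c ∈ M) (hMc : M ∩ cos c H ⊆ X ∪ Y) :
    (H : Set G).ncard + (M + (H' : Set G)).ncard
      ≤ (M + (H : Set G)).ncard + (X + (H' : Set G)).ncard + (Y + (H' : Set G)).ncard := by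
  have hH' : (H' : Set G).Finite := hH.subset hle
  have h1 := Set.ncard_union_add_ncard_inter (cos c H) (M + (H' : Set G)) (cos_finite c hH)
    (hM.add hH')
  rw [cos_ncard] at h1
  have h2 : (cos c H ∪ (M + (H' : Set G))).ncard ≤ (M + (H : Set G)).ncard := by
    refine Set.ncard_le_ncard (Set.union_subset ?_ (Set.add_subset_add_left hle)) (hM.add hH)
    intro x hx
    exact ⟨c, hc, x - c, hx, by simp⟩
  have h3 : (cos c H ∩ (M + (H' : Set G))).ncard
      ≤ ((X + (H' : Set G)) ∪ (Y + (H' : Set G))).ncard := by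
    refine Set.ncard_le_ncard ?_ ((hX.add hH').union (hY.add hH'))
    rintro _ ⟨hx, m, hm, k, hk, rfl⟩
    have hmc : m ∈ cos c H := by
      have h4 := H.sub_mem hx (hle hk)
      have h5 : m + k - c - k = m - c := by abel
      simp only [h5] at h4
      exact h4
    rcases hMc ⟨hm, hmc⟩ with h | h
    · exact Or.inl ⟨m, h, k, hk, rfl⟩
    · exact Or.inr ⟨m, h, k, hk, rfl⟩
  have h4 := Set.ncard_union_le (X + (H' : Set G)) (Y + (H' : Set G))
  omega

/-! ### Saturated pairs -/

/-- Kneser's inequality for a saturated pair that has a convergent set, given the inequality for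
all pairs with a smaller sumset. -/
lemma core {A B : Set G} (hA : A.Finite) (hB : B.Finite)
    (hpA : Per A (stab (A + B))) (hpB : Per B (stab (A + B)))
    (IH : ∀ A' B' : Set G, A'.Finite → B'.Finite → A'.Nonempty → B'.Nonempty →
      (A' + B').ncard < (A + B).ncard → Kn A' B')
    (hex : ∃ C, Conv A B C) : Kn A B := by
  classical
  obtain ⟨C, hC, hmin⟩ : ∃ C, Conv A B C ∧
      ∀ C', Conv A B C' → (stab C : Set G).ncard ≤ (stab C' : Set G).ncard := by
    have hex' : ∃ n, ∃ C, Conv A B C ∧ (stab C : Set G).ncard = n := by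
      obtain ⟨C, hC⟩ := hex
      exact ⟨_, C, hC, rfl⟩
    obtain ⟨C, hC, hn⟩ := Nat.find_spec hex'
    exact ⟨C, hC, fun C' hC' => hn ▸ Nat.find_min' hex' ⟨C', hC', rfl⟩⟩
  have hC' := hC
  obtain ⟨hCs, hC0, hCK, hCc⟩ := hC'
  have hABf : (A + B).Finite := hA.add hB
  have hCf : C.Finite := hABf.subset hCs
  have hHf := stab_finite hC0 hCf
  have hKf : (stab (A + B) : Set G).Finite := hHf.subset hCK
  have hkpos := ncard_pos_sub hKf
  have hui := Set.ncard_union_add_ncard_inter A B hA hB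
  by_contra hnk
  unfold Kn at hnk
  rw [hpA.add_eq, hpB.add_eq, not_le] at hnk
  have hCle : C.ncard ≤ (A + B).ncard := Set.ncard_le_ncard hCs hABf
  by_cases hHK : stab C ≤ stab (A + B)
  · have hKH : stab C = stab (A + B) := le_antisymm hHK hCK
    rw [hKH, (hpA.union hpB).add_eq] at hCc
    omega
  -- a coset of `H` that meets `A + B` without being contained in it
  obtain ⟨g, hg, a, ha, b, hb, hgab⟩ :
      ∃ g ∈ stab C, ∃ a ∈ A, ∃ b ∈ B, g + (a + b) ∉ A + B := by
    by_contra! h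
    refine hHK fun g hg => mem_stab_of_finite hABf ?_
    rintro _ ⟨a, ha, b, hb, rfl⟩
    exact h g hg a ha b hb
  set H := stab C with hH
  have hzn : ¬ cos (a + b) H ⊆ A + B := fun h =>
    hgab (h (by simpa [cos] using hg))
  have hdisj : Disjoint C (cos (a + b) H) := by
    refine Set.disjoint_left.2 fun x hx hx2 => hzn fun y hy => hCs ?_
    have h1 := per_stab C x hx (y - x) (by
      have := H.sub_mem hy hx2
      have h2 : y - (a + b) - (x - (a + b)) = y - x := by abel
      rwa [h2] at this)
    simpa using h1
  have hsum : ∀ X Y : Set G, ∀ c d : G, c + d = a + b →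
      (X ∩ cos c H) + (Y ∩ cos d H) ⊆ cos (a + b) H := by
    rintro X Y c d hcd _ ⟨x, ⟨-, hx⟩, y, ⟨-, hy⟩, rfl⟩
    have h1 := H.add_mem hx hy
    have h2 : x - c + (y - d) = x + y - (a + b) := by rw [← hcd]; abel
    rw [h2] at h1
    exact h1
  have step := fun (c d : G) (hcd : c + d = a + b) (h1 : (A ∩ cos c H).Nonempty)
    (h2 : (B ∩ cos d H).Nonempty) =>
    local_step hA hB hC hmin h1 h2 Set.inter_subset_left Set.inter_subset_left
      (hpA.inter ((per_cos c H).mono hCK)) IH (hsum A B c d hcd) hdisj hzn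
  simp only [← hH] at step
  have hfA : ∀ c, (A ∩ cos c H).Finite := fun c => hA.subset Set.inter_subset_left
  have hfB : ∀ c, (B ∩ cos c H).Finite := fun c => hB.subset Set.inter_subset_left
  obtain ⟨H1, hH1, e1, f1, g1, i1⟩ := step a b rfl ⟨a, ha, self_mem_cos a H⟩
    ⟨b, hb, self_mem_cos b H⟩
  have hno : ∀ c ∈ A ∪ B, ¬ (A ∪ B) ∩ cos c H ⊆ (A ∩ cos a H) ∪ (B ∩ cos b H) := by
    intro c hc hsub
    have := coset_count (hA.union hB) (hfA a) (hfB b) hHf hH1 hc hsub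
    omega
  have hab : a - b ∉ H := by
    intro hab
    refine hno a (Or.inl ha) ?_
    rintro x ⟨hx | hx, hxa⟩
    · exact Or.inl ⟨hx, hxa⟩
    · refine Or.inr ⟨hx, ?_⟩
      have h1 := H.add_mem hxa hab
      have h2 : x - a + (a - b) = x - b := by abel
      rwa [h2] at h1
  have hB2 : (B ∩ cos a H).Nonempty := by
    by_contra! h
    refine hno a (Or.inl ha) ?_
    rintro x ⟨hx | hx, hxa⟩
    · exact Or.inl ⟨hx, hxa⟩
    · exact (Set.eq_empty_iff_forall_notMem.1 h x ⟨hx, hxa⟩).elim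
  have hA2 : (A ∩ cos b H).Nonempty := by
    by_contra! h
    refine hno b (Or.inr hb) ?_
    rintro x ⟨hx | hx, hxb⟩
    · exact (Set.eq_empty_iff_forall_notMem.1 h x ⟨hx, hxb⟩).elim
    · exact Or.inr ⟨hx, hxb⟩
  obtain ⟨H2, hH2, e2, f2, g2, i2⟩ := step b a (add_comm b a) hA2 hB2
  have hdab : Disjoint (cos a H) (cos b H) := by
    refine Set.disjoint_left.2 fun x hx hx2 => hab ?_
    have h1 := H.sub_mem hx2 hx
    have h2 : x - b - (x - a) = a - b := by abel
    rwa [h2] at h1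
  -- the two cosets `a + H`, `b + H` contribute `2|H|` elements to `(A ∪ B) + H`
  have c1 := Set.ncard_union_add_ncard_inter (cos a H ∪ cos b H) (A ∪ B)
    ((cos_finite a hHf).union (cos_finite b hHf)) (hA.union hB)
  rw [Set.ncard_union_eq hdab (cos_finite a hHf) (cos_finite b hHf), cos_ncard, cos_ncard] at c1
  have c2 : ((cos a H ∪ cos b H) ∪ (A ∪ B)).ncard ≤ ((A ∪ B) + (H : Set G)).ncard := by
    refine Set.ncard_le_ncard (Set.union_subset (Set.union_subset ?_ ?_) (subset_add _ H))
      ((hA.union hB).add hHf)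
    · exact fun x hx => ⟨a, Or.inl ha, x - a, hx, by simp⟩
    · exact fun x hx => ⟨b, Or.inr hb, x - b, hx, by simp⟩
  have c3 : ((cos a H ∪ cos b H) ∩ (A ∪ B)).ncard
      ≤ (((A ∩ cos a H) ∪ (B ∩ cos b H)) ∪ ((A ∩ cos b H) ∪ (B ∩ cos a H))).ncard := by
    refine Set.ncard_le_ncard ?_ (((hfA a).union (hfB b)).union ((hfA b).union (hfB a)))
    rintro x ⟨h | h, h' | h'⟩ <;> simp [h, h']
  have c4 := Set.ncard_union_le ((A ∩ cos a H) ∪ (B ∩ cos b H)) ((A ∩ cos b H) ∪ (B ∩ cos a H))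
  have c5 := Set.ncard_union_le (A ∩ cos a H) (B ∩ cos b H)
  have c6 := Set.ncard_union_le (A ∩ cos b H) (B ∩ cos a H)
  have gr : ∀ (X : Set G) (L : AddSubgroup G), X.Finite → L ≤ H →
      X.ncard ≤ (X + (L : Set G)).ncard := fun X L hX hL =>
    Set.ncard_le_ncard (subset_add X L) (hX.add (hHf.subset hL))
  have d1 := gr _ H1 (hfA a) hH1
  have d2 := gr _ H1 (hfB b) hH1
  have d3 := gr _ H2 (hfA b) hH2
  have d4 := gr _ H2 (hfB a) hH2
  omega

lemma stab_translate (X : Set G) (t : G) : stab (X + {t}) = stab X := by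
  ext g
  simp only [mem_stab, Set.add_singleton, Set.image_add_right, Set.mem_preimage]
  constructor
  · intro h b
    have := h (b + t)
    simpa [← add_assoc] using this
  · intro h b
    rw [add_assoc]
    exact h _

lemma ncard_translate (X : Set G) (t : G) : (X + {t}).ncard = X.ncard := by
  rw [Set.add_singleton, Set.ncard_image_of_injective _ (add_left_injective t)]

lemma kn_translate {A B : Set G} (t : G) (h : Kn A (B + {t})) : Kn A B := by
  unfold Kn at *
  rw [← add_assoc, stab_translate, ncard_translate, add_right_comm B, ncard_translate] at h
  exact h

/-- Kneser's inequality for saturated pairs with `|A + B| = n`, given the inequality for all pairs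
with a smaller sumset; by induction on `m = |A|`. When `(A ∩ B) + (A ∪ B)` is all of `A + B`, the
pair `A ∩ B, A ∪ B` is again saturated, so the inner induction applies to it. -/
lemma saturated (n : ℕ)
    (IH : ∀ A' B' : Set G, A'.Finite → B'.Finite → A'.Nonempty → B'.Nonempty →
      (A' + B').ncard < n → Kn A' B') (m : ℕ) :
    ∀ A B : Set G, A.Finite → B.Finite → A.Nonempty → B.Nonempty → (A + B).ncard = n →
      Per A (stab (A + B)) → Per B (stab (A + B)) → A.ncard = m → Kn A B := by
  induction m using Nat.strong_induction_on with
  | _ m ihm =>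
  intro A B hA hB hA0 hB0 hn hpA hpB hm
  obtain ⟨a, ha⟩ := hA0
  by_cases hone : ∀ a' ∈ A, a' - a ∈ stab (A + B)
  · -- `A` is a single coset of the stabilizer
    have h1 : A.ncard ≤ (stab (A + B) : Set G).ncard := by
      rw [← cos_ncard a]
      exact Set.ncard_le_ncard hone
        (cos_finite a (stab_finite (Set.Nonempty.add ⟨a, ha⟩ hB0) (hA.add hB)))
    have h2 : B.ncard ≤ (A + B).ncard := by
      rw [add_comm]; exact ncard_add_sub_le hB hA ⟨a, ha⟩
    unfold Kn
    rw [hpA.add_eq, hpB.add_eq]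
    omega
  push Not at hone
  obtain ⟨a', ha', hna⟩ := hone
  -- a translate of `B` that contains `a` but not `a'`
  obtain ⟨b, hb, hbn⟩ : ∃ b ∈ B, (a' - a) + b ∉ B := by
    by_contra! h
    refine hna (mem_stab_of_finite (hA.add hB) ?_)
    rintro _ ⟨x, hx, y, hy, rfl⟩
    exact ⟨x, hx, a' - a + y, h y hy, by simp only; abel⟩
  apply kn_translate (a - b)
  have hsum : A + (B + {a - b}) = (A + B) + {a - b} := (add_assoc _ _ _).symm
  have hst : stab (A + (B + {a - b})) = stab (A + B) := by rw [hsum, stab_translate]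
  have hcard : (A + (B + {a - b})).ncard = n := by rw [hsum, ncard_translate, hn]
  have haB : a ∈ B + {a - b} := ⟨b, hb, a - b, rfl, by simp⟩
  have ha'B : a' ∉ B + {a - b} := by
    rintro ⟨y, hy, _, rfl, h⟩
    apply hbn
    have : a' - a + b = y := by
      rw [← h]; simp only; abel
    rwa [this]
  have hBf : (B + {a - b}).Finite := hB.add (Set.finite_singleton _)
  have hpB' : Per (B + {a - b}) (stab (A + (B + {a - b}))) := by
    rw [hst]; exact hpB.add_right _
  rw [← hst] at hpA
  generalize B + {a - b} = D at *
  have hDf := hBf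
  -- the Dyson transform of `A, D` gives a convergent
  have hCs : (A ∩ D) + (A ∪ D) ⊆ A + D := by
    rintro _ ⟨x, ⟨hxA, hxD⟩, y, hy | hy, rfl⟩
    · exact ⟨y, hy, x, hxD, add_comm _ _⟩
    · exact ⟨x, hxA, y, hy, rfl⟩
  have hI0 : (A ∩ D).Nonempty := ⟨a, ha, haB⟩
  have hU0 : (A ∪ D).Nonempty := ⟨a, Or.inl ha⟩
  have hIf : (A ∩ D).Finite := hA.subset Set.inter_subset_left
  have hUf : (A ∪ D).Finite := hA.union hDf
  have hperC : Per ((A ∩ D) + (A ∪ D)) (stab (A + D)) := (hpA.inter hpB').add_right _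
  have hIlt : (A ∩ D).ncard < m := by
    rw [← hm]
    exact Set.ncard_lt_ncard ⟨Set.inter_subset_left, fun h => ha'B (h ha').2⟩ hA
  have hkn : Kn (A ∩ D) (A ∪ D) := by
    rcases (Set.ncard_le_ncard hCs (hA.add hDf)).lt_or_eq with hlt | heq
    · exact IH _ _ hIf hUf hI0 hU0 (hcard ▸ hlt)
    · have hEq := Set.eq_of_subset_of_ncard_le hCs heq.ge (hA.add hDf)
      refine ihm _ hIlt _ _ hIf hUf hI0 hU0 (heq.trans hcard) ?_ ?_ rfl
      · rw [hEq]; exact hpA.inter hpB'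
      · rw [hEq]; exact hpA.union hpB'
  refine core hA hDf hpA hpB' (by rw [hcard]; exact IH)
    ⟨_, hCs, hI0.add hU0, hperC.le_stab, ?_⟩
  unfold Kn at hkn
  have := Set.ncard_le_ncard (subset_add (A ∩ D) (stab ((A ∩ D) + (A ∪ D))))
    (hIf.add (stab_finite (hI0.add hU0) (hIf.add hUf)))
  omega

/-! ### Kneser's theorem -/

/-- **Kneser's theorem**, as an inequality valid for all finite nonempty pairs. -/
theorem kneser (n : ℕ) : ∀ A B : Set G, A.Finite → B.Finite → A.Nonempty → B.Nonempty →
    (A + B).ncard = n → Kn A B := by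
  induction n using Nat.strong_induction_on with
  | _ n ih =>
  intro A B hA hB hA0 hB0 hn
  have hKf := stab_finite (hA0.add hB0) (hA.add hB)
  -- replacing `A, B` by their saturations changes neither the sumset nor the inequality
  have hsum : (A + (stab (A + B) : Set G)) + (B + (stab (A + B) : Set G)) = A + B := by
    rw [add_add_add_comm, ← add_assoc, (per_stab (A + B)).add_eq, (per_stab (A + B)).add_eq]
  have h := saturated n (fun A' B' h1 h2 h3 h4 h5 => ih _ h5 A' B' h1 h2 h3 h4 rfl) _
    (A + (stab (A + B) : Set G)) (B + (stab (A + B) : Set G)) (hA.add hKf) (hB.add hKf)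
    (hA0.mono (subset_add _ _)) (hB0.mono (subset_add _ _)) (by rw [hsum, hn])
    (by rw [hsum]; exact per_add _ _) (by rw [hsum]; exact per_add _ _) rfl
  unfold Kn at h ⊢
  rwa [hsum, (per_add _ _).add_eq, (per_add _ _).add_eq] at h

end KneserAux

/-- Kneser's addition theorem (precise form): let `A` and `B` be finite
nonempty subsets of an abelian group `G` and let
`H = H(A + B) = {g : (A + B) + g = A + B}` be the stabilizer of the sumset
`A + B`. If `|A + B| < |A| + |B|`, then
`|A + B| = |A + H| + |B + H| − |H|`. -/
theorem kneser_precise {G : Type*} [AddCommGroup G]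
    (A B : Set G) (hAfin : A.Finite) (hBfin : B.Finite)
    (hA : A.Nonempty) (hB : B.Nonempty)
    (H : Set G) (hH : H = {g : G | (A + B) + {g} = A + B})
    (hlt : (A + B).ncard < A.ncard + B.ncard) :
    (A + B).ncard + H.ncard = (A + H).ncard + (B + H).ncard := by
  have hS : H = (KneserAux.stab (A + B) : Set G) := by
    rw [hH]
    ext g
    rw [Set.mem_ofPred_eq, SetLike.mem_coe, AddAction.mem_stabilizer_iff, add_comm,
      Set.singleton_add, ← Set.image_vadd]
    rfl
  rw [hS]
  have hk := KneserAux.kneser _ A B hAfin hBfin hA hB rfl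
  have hSf := KneserAux.stab_finite (hA.add hB) (hAfin.add hBfin)
  have h1 := Set.ncard_le_ncard (KneserAux.subset_add A (KneserAux.stab (A + B))) (hAfin.add hSf)
  have h2 := Set.ncard_le_ncard (KneserAux.subset_add B (KneserAux.stab (A + B))) (hBfin.add hSf)
  obtain ⟨p, hp⟩ := KneserAux.dvd_ncard_add A (KneserAux.stab (A + B))
  obtain ⟨q, hq⟩ := KneserAux.dvd_ncard_add B (KneserAux.stab (A + B))
  obtain ⟨r, hr⟩ := KneserAux.dvd_ncard_add (A + B) (KneserAux.stab (A + B))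
  rw [(KneserAux.per_stab (A + B)).add_eq] at hr
  unfold KneserAux.Kn at hk
  refine le_antisymm ?_ hk
  -- all terms are multiples of `|H|`, so `|A + B| < |A + H| + |B + H|` leaves room for `|H|`
  have h3 : (A + B).ncard < (A + (KneserAux.stab (A + B) : Set G)).ncard
      + (B + (KneserAux.stab (A + B) : Set G)).ncard := by omega
  rw [hp, hq, hr, ← mul_add] at h3 ⊢
  have h4 := Nat.lt_of_mul_lt_mul_left h3
  calc _ = (KneserAux.stab (A + B) : Set G).ncard * (r + 1) := by ring
    _ ≤ _ := Nat.mul_le_mul_left _ h4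
end
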